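/- arXiv:2405.19786 — 3 statements merged into one kernel-verified Lean document; each statement's English description precedes it below -/
import Mathlib

section
/- Let N ≥ 2 and 0 < r₁ < r₂ < R, with S = B_{r₂}∖closure(B_{r₁}). Then inf{ H^{N-1}(∂E)/|E ∩ S| : E ⋐ B_R open with smooth boundary and |E ∩ S| > 0 } = H^{N-1}(∂B_{r₂})/|S|, and E = B_{r₂} is optimal. -/
open MeasureTheory Filter
open scoped ENNReal

noncomputable section

/-- Radial projection. -/
def radP {V : Type*} [NormedAddCommGroup V] [NormedSpace ℝ V] (x : V) : V := ‖x‖⁻¹ • x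

lemma radP_smul {V : Type*} [NormedAddCommGroup V] [NormedSpace ℝ V] {t : ℝ} (ht : 0 < t) (x : V) :
    radP (t • x) = radP x := by
  unfold radP
  rw [norm_smul, smul_smul, Real.norm_of_nonneg ht.le]
  congr 1
  field_simp

lemma norm_radP {V : Type*} [NormedAddCommGroup V] [NormedSpace ℝ V] {x : V} (hx : x ≠ 0) :
    ‖radP x‖ = 1 := by
  unfold radP
  rw [norm_smul, norm_inv, norm_norm, inv_mul_cancel₀ (norm_ne_zero_iff.2 hx)]

lemma radP_lip {V : Type*} [NormedAddCommGroup V] [InnerProductSpace ℝ V] {a : ℝ} (ha : 0 < a) :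
    LipschitzOnWith (Real.toNNReal a⁻¹) (radP : V → V) {x | a ≤ ‖x‖} := by
  refine LipschitzOnWith.of_dist_le_mul ?_
  intro x hx y hy
  simp only [Set.mem_ofPred_eq] at hx hy
  rw [Real.coe_toNNReal _ (inv_nonneg.2 ha.le), dist_eq_norm, dist_eq_norm]
  have hx0 : 0 < ‖x‖ := ha.trans_le hx
  have hy0 : 0 < ‖y‖ := ha.trans_le hy
  have key : ‖x‖ * ‖y‖ * ‖radP x - radP y‖ ^ 2 = ‖x - y‖ ^ 2 - (‖x‖ - ‖y‖) ^ 2 := by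
    rw [norm_sub_sq_real, norm_sub_sq_real, norm_radP (norm_pos_iff.1 hx0),
      norm_radP (norm_pos_iff.1 hy0)]
    unfold radP
    rw [real_inner_smul_left, real_inner_smul_right]
    field_simp
    ring
  refine abs_le_of_sq_le_sq' ?_ (by positivity) |>.2
  have h1 : a * a ≤ ‖x‖ * ‖y‖ := mul_le_mul hx hy ha.le hx0.le
  have h2 : a * a * ‖radP x - radP y‖ ^ 2 ≤ ‖x - y‖ ^ 2 := by
    nlinarith [sq_nonneg (‖x‖ - ‖y‖), sq_nonneg ‖radP x - radP y‖,
      mul_le_mul_of_nonneg_right h1 (sq_nonneg ‖radP x - radP y‖)]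
  rw [mul_pow, inv_pow, ← div_eq_inv_mul, le_div_iff₀ (by positivity)]
  linarith

lemma radP_measurable {n : ℕ} : Measurable (radP : EuclideanSpace ℝ (Fin (n+1)) → _) := by
  unfold radP
  fun_prop

/-- cone measure -/
def coneM (n : ℕ) : Measure (EuclideanSpace ℝ (Fin (n+1))) :=
  Measure.map radP (volume.restrict (Metric.ball 0 1))

def sphM (n : ℕ) : Measure (EuclideanSpace ℝ (Fin (n+1))) :=
  (Measure.hausdorffMeasure (n:ℝ)).restrict (Metric.sphere 0 1)

lemma coneM_apply {n : ℕ} {A : Set (EuclideanSpace ℝ (Fin (n+1)))} (hA : MeasurableSet A) :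
    coneM n A = volume (radP ⁻¹' A ∩ Metric.ball 0 1) := by
  rw [coneM, Measure.map_apply radP_measurable hA, Measure.restrict_apply (radP_measurable hA)]

open scoped Pointwise in
lemma cone_ball {n : ℕ} {A : Set (EuclideanSpace ℝ (Fin (n+1)))} (hA : MeasurableSet A) {s : ℝ}
    (hs : 0 < s) : volume (radP ⁻¹' A ∩ Metric.ball 0 s) = ENNReal.ofReal (s^(n+1)) * coneM n A := by
  have : radP ⁻¹' A ∩ Metric.ball 0 s = s • (radP ⁻¹' A ∩ Metric.ball 0 1) := by
    ext x
    rw [Set.mem_smul_set_iff_inv_smul_mem₀ hs.ne']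
    simp only [Set.mem_inter_iff, Set.mem_preimage, radP_smul (inv_pos.2 hs), mem_ball_zero_iff,
      norm_smul, norm_inv, Real.norm_of_nonneg hs.le]
    rw [← div_eq_inv_mul, div_lt_one hs]
  rw [this, Measure.addHaar_smul, coneM_apply hA, abs_of_nonneg (by positivity)]
  simp

instance {n : ℕ} : IsFiniteMeasure (coneM n) := by
  have : IsFiniteMeasure (volume.restrict (Metric.ball (0 : EuclideanSpace ℝ (Fin (n+1))) 1)) :=
    ⟨by simpa using measure_ball_lt_top⟩
  unfold coneM; infer_instance

lemma cone_shell {n : ℕ} (A : Set (EuclideanSpace ℝ (Fin (n+1)))) {r s : ℝ}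
    (hr : 0 < r) (hs : 0 < s) :
    volume (radP ⁻¹' A ∩ (Metric.ball 0 s \ Metric.closedBall 0 r)) ≤
      ENNReal.ofReal (s^(n+1) - r^(n+1)) * coneM n A := by
  rcases le_total s r with h | h
  · have : Metric.ball (0 : EuclideanSpace ℝ (Fin (n+1))) s \ Metric.closedBall 0 r = ∅ :=
      Set.sdiff_eq_empty.2 ((Metric.ball_subset_ball h).trans Metric.ball_subset_closedBall)
    simp [this]
  set A' := toMeasurable (coneM n) A
  have hA' : MeasurableSet A' := measurableSet_toMeasurable _ _
  have hAA : A ⊆ A' := subset_toMeasurable _ _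
  rw [← measure_toMeasurable (μ := coneM n) A]
  have hsub : radP ⁻¹' A ∩ (Metric.ball 0 s \ Metric.closedBall 0 r) ⊆
      (radP ⁻¹' A' ∩ Metric.ball 0 s) \ (radP ⁻¹' A' ∩ Metric.ball 0 r) := by
    rintro x ⟨hx, hx1, hx2⟩
    exact ⟨⟨hAA hx, hx1⟩, fun h => hx2 (Metric.ball_subset_closedBall h.2)⟩
  refine (measure_mono hsub).trans ?_
  rw [measure_sdiff (Set.inter_subset_inter_right _ (Metric.ball_subset_ball h))
    ((radP_measurable hA').inter measurableSet_ball).nullMeasurableSet, cone_ball hA' hs,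
    cone_ball hA' hr, ENNReal.ofReal_sub _ (by positivity), ENNReal.sub_mul]
  · intros; exact measure_ne_top _ _
  · rw [cone_ball hA' hr]; exact ENNReal.mul_ne_top ENNReal.ofReal_ne_top (measure_ne_top _ _)

lemma coneM_univ {n : ℕ} : coneM n Set.univ = volume (Metric.ball (0 : EuclideanSpace ℝ (Fin (n+1))) 1) := by
  rw [coneM_apply MeasurableSet.univ]; simp

lemma shell_vol {n : ℕ} {r s : ℝ} (hr : 0 < r) (hs : r < s) :
    volume (Metric.ball (0 : EuclideanSpace ℝ (Fin (n+1))) s \ Metric.closedBall 0 r) =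
      ENNReal.ofReal (s^(n+1) - r^(n+1)) * coneM n Set.univ := by
  have hc : Metric.closedBall (0 : EuclideanSpace ℝ (Fin (n+1))) r ⊆ Metric.ball 0 s :=
    Metric.closedBall_subset_ball hs
  rw [measure_sdiff hc measurableSet_closedBall.nullMeasurableSet measure_closedBall_lt_top.ne,
    Measure.addHaar_ball _ _ (hr.trans hs).le, Measure.addHaar_closedBall _ _ hr.le, coneM_univ,
    ENNReal.ofReal_sub _ (by positivity), ENNReal.sub_mul]
  · simp
  · intros; exact measure_ball_lt_top.ne

/-- Finite Hausdorff measure of sphere. -/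
lemma sphere_finite (n : ℕ) :
    Measure.hausdorffMeasure (n:ℝ) (Metric.sphere (0 : EuclideanSpace ℝ (Fin (n+1))) 1) < ∞ := by
  let φ : Fin (n+1) × Bool → (Fin n → ℝ) → EuclideanSpace ℝ (Fin (n+1)) :=
    fun p y => WithLp.toLp 2 (Fin.insertNth (α := fun _ => ℝ) p.1 (if p.2 then 1 else -1) y)
  have hφ : ∀ p, ∃ K, LipschitzWith K (φ p) := by
    intro p
    refine ⟨_, (PiLp.lipschitzWith_toLp 2 (fun _ : Fin (n+1) => ℝ)).comp
      (Kf := _) (Kg := 1) (g := fun y => Fin.insertNth (α := fun _ => ℝ) p.1 (if p.2 then 1 else -1) y) ?_⟩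
    refine LipschitzWith.of_dist_le_mul fun x y => ?_
    rw [NNReal.coe_one, one_mul, dist_pi_le_iff dist_nonneg]
    intro j
    induction j using Fin.succAboveCases p.1 with
    | x => simp
    | p j => simpa using dist_le_pi_dist x y j
  have hφ1 : ∀ p y, 1 ≤ ‖φ p y‖ := by
    intro p y
    refine le_trans ?_ (PiLp.norm_apply_le (φ p y) p.1)
    simp only [φ]
    rcases p.2 <;> simp
  have hsub : Metric.sphere (0 : EuclideanSpace ℝ (Fin (n+1))) 1 ⊆
      ⋃ p, radP '' (φ p '' Set.Icc (-1) 1) := by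
    intro x hx
    have hx1 : ‖x‖ = 1 := by simpa using hx
    obtain ⟨i, -, hi⟩ := Finset.exists_max_image Finset.univ (fun i => |x i|) ⟨0, Finset.mem_univ _⟩
    have hxi : 0 < |x i| := by
      by_contra h
      have : x = 0 := by
        ext j
        have := hi j (Finset.mem_univ _)
        have h3 : |x j| ≤ 0 := by linarith
        simpa using h3
      rw [this] at hx1; simp at hx1
    refine Set.mem_iUnion.2 ⟨(i, decide (0 < x i)), ?_⟩
    refine ⟨|x i|⁻¹ • x, ⟨fun j => |x i|⁻¹ * x (i.succAbove j), ?_, ?_⟩, ?_⟩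
    · have : ∀ j, |(|x i|⁻¹ * x (i.succAbove j))| ≤ 1 := by
        intro j
        rw [abs_mul, abs_inv, abs_abs, ← div_eq_inv_mul, div_le_one hxi]
        exact hi _ (Finset.mem_univ _)
      exact ⟨fun j => (abs_le.1 (this j)).1, fun j => (abs_le.1 (this j)).2⟩
    · ext j
      induction j using Fin.succAboveCases i with
      | x =>
        have hne : x i ≠ 0 := abs_pos.1 hxi
        by_cases h : 0 < x i
        · simp [φ, h, abs_of_pos h, hne]
        · simp [φ, h, abs_of_nonpos (not_lt.1 h), hne]
      | p j => simp [φ]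
    · rw [radP_smul (inv_pos.2 hxi), radP, hx1]; simp
  refine (measure_mono hsub).trans_lt ((measure_iUnion_fintype_le _ _).trans_lt ?_)
  refine ENNReal.sum_lt_top.2 fun p _ => ?_
  obtain ⟨K, hK⟩ := hφ p
  have h1 := ((radP_lip one_pos).mono (s := φ p '' Set.Icc (-1) 1) (by
    rintro _ ⟨y, -, rfl⟩; exact hφ1 p y)).hausdorffMeasure_image_le (d := n) (by positivity)
  have h2 := hK.hausdorffMeasure_image_le (d := n) (by positivity) (Set.Icc (-1) 1)
  have h3 : (Measure.hausdorffMeasure (n:ℝ) : Measure (Fin n → ℝ)) = volume := by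
    have := hausdorffMeasure_pi_real (ι := Fin n)
    rwa [Fintype.card_fin] at this
  rw [h3] at h2
  refine h1.trans_lt (ENNReal.mul_lt_top (ENNReal.rpow_lt_top_of_nonneg (by positivity) (by simp)) (h2.trans_lt ?_))
  exact ENNReal.mul_lt_top (ENNReal.rpow_lt_top_of_nonneg (by positivity) (by simp))
    isCompact_Icc.measure_lt_top

instance {n : ℕ} : IsFiniteMeasure (sphM n) :=
  ⟨by simpa [sphM] using sphere_finite n⟩

lemma exists_rot {n : ℕ} {x y : EuclideanSpace ℝ (Fin (n+1))} (h : ‖x‖ = ‖y‖) :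
    ∃ e : EuclideanSpace ℝ (Fin (n+1)) ≃ₗᵢ[ℝ] EuclideanSpace ℝ (Fin (n+1)), e x = y :=
  ⟨_, Submodule.reflection_sub h⟩

lemma coneM_rot {n : ℕ} (e : EuclideanSpace ℝ (Fin (n+1)) ≃ₗᵢ[ℝ] EuclideanSpace ℝ (Fin (n+1)))
    {B : Set (EuclideanSpace ℝ (Fin (n+1)))} (hB : MeasurableSet B) :
    coneM n (e ⁻¹' B) = coneM n B := by
  rw [coneM_apply hB, coneM_apply (e.continuous.measurable hB)]
  have : radP ⁻¹' (e ⁻¹' B) ∩ Metric.ball 0 1 = e ⁻¹' (radP ⁻¹' B ∩ Metric.ball 0 1) := by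
    ext x
    simp [radP]
  rw [this, e.measurePreserving.measure_preimage
    ((radP_measurable hB).inter measurableSet_ball).nullMeasurableSet]

lemma sphM_rot {n : ℕ} (e : EuclideanSpace ℝ (Fin (n+1)) ≃ₗᵢ[ℝ] EuclideanSpace ℝ (Fin (n+1)))
    {B : Set (EuclideanSpace ℝ (Fin (n+1)))} (hB : MeasurableSet B) :
    sphM n (e ⁻¹' B) = sphM n B := by
  rw [sphM, Measure.restrict_apply hB, Measure.restrict_apply (e.continuous.measurable hB)]
  have : e ⁻¹' B ∩ Metric.sphere 0 1 = e ⁻¹' (B ∩ Metric.sphere 0 1) := by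
    ext x
    simp
  rw [this]
  exact e.toIsometryEquiv.hausdorffMeasure_preimage _ _

lemma prop_of_uniform {n : ℕ} (ρ m : Measure (EuclideanSpace ℝ (Fin (n+1)))) [IsFiniteMeasure ρ]
    [IsFiniteMeasure m] (hac : ρ ≪ m) (hm : ∀ᵐ x ∂m, ‖x‖ = 1)
    (h1 : ∀ x y r, ‖x‖ = 1 → ‖y‖ = 1 → ρ (Metric.closedBall x r) = ρ (Metric.closedBall y r))
    (h2 : ∀ x y r, ‖x‖ = 1 → ‖y‖ = 1 → m (Metric.closedBall x r) = m (Metric.closedBall y r)) :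
    ∃ c : ℝ≥0∞, ρ = c • m := by
  rcases eq_or_ne m 0 with rfl | hm0
  · exact ⟨0, by simpa using hac⟩
  have hne : (ae m).NeBot := ae_neBot.2 hm0
  have hd := Besicovitch.ae_tendsto_rnDeriv ρ m
  obtain ⟨x0, hx0, hx1⟩ := (hd.and hm).exists
  refine ⟨ρ.rnDeriv m x0, ?_⟩
  rw [← withDensity_const]
  have hLD : ρ.HaveLebesgueDecomposition m := Measure.haveLebesgueDecomposition_of_sigmaFinite ρ m
  refine (Measure.withDensity_rnDeriv_eq ρ m hac).symm.trans (withDensity_congr_ae ?_)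
  filter_upwards [hd, hm] with x hx hxn
  refine tendsto_nhds_unique hx ?_
  refine hx0.congr fun r => ?_
  rw [h1 x0 x r hx1 hxn, h2 x0 x r hx1 hxn]

lemma coneM_sph {n : ℕ} (A : Set (EuclideanSpace ℝ (Fin (n+1)))) :
    coneM n A * sphM n Set.univ = coneM n Set.univ * sphM n A := by
  have rot : ∀ x y : EuclideanSpace ℝ (Fin (n+1)), ∀ r, ‖x‖ = 1 → ‖y‖ = 1 →
      ∃ e : EuclideanSpace ℝ (Fin (n+1)) ≃ₗᵢ[ℝ] EuclideanSpace ℝ (Fin (n+1)),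
        Metric.closedBall x r = e ⁻¹' Metric.closedBall y r := by
    intro x y r hx hy
    obtain ⟨e, rfl⟩ := exists_rot (hx.trans hy.symm)
    refine ⟨e, ?_⟩
    ext z
    simp
  have hc : ∀ x y : EuclideanSpace ℝ (Fin (n+1)), ∀ r, ‖x‖ = 1 → ‖y‖ = 1 →
      coneM n (Metric.closedBall x r) = coneM n (Metric.closedBall y r) := by
    intro x y r hx hy
    obtain ⟨e, he⟩ := rot x y r hx hy
    rw [he, coneM_rot e measurableSet_closedBall]
  have hs : ∀ x y : EuclideanSpace ℝ (Fin (n+1)), ∀ r, ‖x‖ = 1 → ‖y‖ = 1 →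
      sphM n (Metric.closedBall x r) = sphM n (Metric.closedBall y r) := by
    intro x y r hx hy
    obtain ⟨e, he⟩ := rot x y r hx hy
    rw [he, sphM_rot e measurableSet_closedBall]
  have hm : ∀ x y : EuclideanSpace ℝ (Fin (n+1)), ∀ r, ‖x‖ = 1 → ‖y‖ = 1 →
      (coneM n + sphM n) (Metric.closedBall x r) = (coneM n + sphM n) (Metric.closedBall y r) := by
    intro x y r hx hy
    rw [Measure.add_apply, Measure.add_apply, hc x y r hx hy, hs x y r hx hy]
  have hms : MeasurableSet {x : EuclideanSpace ℝ (Fin (n+1)) | ‖x‖ = 1} :=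
    measurableSet_eq_fun (by fun_prop) (by fun_prop)
  have hae : ∀ᵐ x ∂(coneM n + sphM n), ‖x‖ = 1 := by
    rw [ae_add_measure_iff]
    constructor
    · rw [coneM, ae_map_iff radP_measurable.aemeasurable hms]
      refine ae_restrict_of_ae ?_
      have : ∀ᵐ x : EuclideanSpace ℝ (Fin (n+1)), x ≠ 0 := by
        simp [ae_iff]
      filter_upwards [this] with x hx using norm_radP hx
    · rw [sphM]
      filter_upwards [ae_restrict_mem Metric.isClosed_sphere.measurableSet] with x hx
      simpa using hx
  obtain ⟨c, h1⟩ := prop_of_uniform (coneM n) (coneM n + sphM n)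
    (Measure.absolutelyContinuous_of_le (Measure.le_add_right le_rfl)) hae hc hm
  obtain ⟨c', h2⟩ := prop_of_uniform (sphM n) (coneM n + sphM n)
    (Measure.absolutelyContinuous_of_le (Measure.le_add_left le_rfl)) hae hs hm
  generalize coneM n + sphM n = m at h1 h2
  rw [h1, h2]
  simp only [Measure.smul_apply, smul_eq_mul]
  ring

lemma exists_frontier {V : Type*} [NormedAddCommGroup V] [NormedSpace ℝ V] {E : Set V} {R : ℝ}
    (hE : IsOpen E) (hR : closure E ⊆ Metric.ball 0 R) {x : V} (hx : x ∈ E) (hx0 : x ≠ 0) :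
    ∃ t : ℝ, 1 ≤ t ∧ t • x ∈ frontier E := by
  by_contra! hcon
  have hp : IsPreconnected ((fun t : ℝ => t • x) '' Set.Ici 1) :=
    isPreconnected_Ici.image _ (by fun_prop)
  have hn : 0 < ‖x‖ := norm_pos_iff.2 hx0
  obtain ⟨y, -, hy1, hy2⟩ := hp E (closure E)ᶜ hE isClosed_closure.isOpen_compl (by
      rintro _ ⟨t, ht, rfl⟩
      by_contra h
      rw [Set.mem_union, not_or, Set.notMem_compl_iff] at h
      exact hcon t ht (by rw [hE.frontier_eq]; exact ⟨h.2, h.1⟩))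
    ⟨x, ⟨1, by simp, by simp⟩, hx⟩
    ⟨(max 1 (R / ‖x‖)) • x, ⟨_, Set.mem_Ici.2 (le_max_left _ _), rfl⟩, fun h => by
      have := hR h
      rw [mem_ball_zero_iff, norm_smul, Real.norm_of_nonneg (by positivity),
        ← lt_div_iff₀ hn] at this
      exact absurd this (not_lt.2 (le_max_right _ _))⟩
  exact hy2 (subset_closure hy1)

/-- elementary inequality -/
lemma elem_ineq {n : ℕ} {r s q a L : ℝ} (hr : 0 < r) (hs : 0 < s) (hsq : s ≤ q)
    (ha : 0 < a) (hsa : s ≤ L * a) (hL : 0 < L) (hrq : r < q) :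
    q ^ n * ((s^(n+1) - r^(n+1)) * (a⁻¹) ^ n) ≤ L ^ n * (q^(n+1) - r^(n+1)) := by
  have hpos : 0 ≤ q^(n+1) - r^(n+1) := by
    have := pow_le_pow_left₀ hr.le hrq.le (n+1); linarith
  have h1 : (s^(n+1) - r^(n+1)) * q^n ≤ (q^(n+1) - r^(n+1)) * s^n := by
    have h2 := pow_le_pow_left₀ hs.le hsq n
    have h3 : 0 ≤ s^n * q^n * (q - s) := mul_nonneg (mul_nonneg (pow_nonneg hs.le _) (pow_nonneg (hr.trans hrq).le _)) (by linarith)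
    have h4 : 0 ≤ r^(n+1) * (q^n - s^n) := mul_nonneg (by positivity) (by linarith)
    have e1 : s^(n+1) = s^n * s := pow_succ _ _
    have e2 : q^(n+1) = q^n * q := pow_succ _ _
    rw [e1, e2]
    nlinarith
  have h2 : s^n ≤ L^n * a^n := by
    rw [← mul_pow]; exact pow_le_pow_left₀ hs.le hsa n
  rw [inv_pow, ← mul_assoc, ← div_eq_mul_inv, div_le_iff₀ (by positivity)]
  calc q ^ n * (s^(n+1) - r^(n+1)) = (s^(n+1) - r^(n+1)) * q^n := by ring
    _ ≤ _ := h1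
    _ ≤ (q^(n+1) - r^(n+1)) * (L^n * a^n) := by gcongr
    _ = _ := by ring

lemma main_L {n : ℕ} {r q R L : ℝ} (hr : 0 < r) (hrq : r < q) (hL : 1 < L)
    {E : Set (EuclideanSpace ℝ (Fin (n+1)))} (hE : IsOpen E) (hR : closure E ⊆ Metric.ball 0 R) :
    ENNReal.ofReal (q ^ n) * sphM n Set.univ * volume (E ∩ (Metric.ball 0 q \ Metric.closedBall 0 r)) ≤
     ENNReal.ofReal (L ^ n) * (Measure.hausdorffMeasure (n:ℝ) (frontier E) *
        volume (Metric.ball (0 : EuclideanSpace ℝ (Fin (n+1))) q \ Metric.closedBall 0 r)) := by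
  have hq : 0 < q := hr.trans hrq
  have hL0 : 0 < L := one_pos.trans hL
  let a : ℕ → ℝ := fun k => r * L ^ k
  have ha : ∀ k, 0 < a k := fun k => by positivity
  have hamono : Monotone a := fun i j h => by
    simp only [a]; gcongr; exact hL.le
  let F : ℕ → Set (EuclideanSpace ℝ (Fin (n+1))) :=
    fun k => frontier E ∩ norm ⁻¹' Set.Ico (a k) (a (k+1))
  have hFm : ∀ k, MeasurableSet (F k) := fun k =>
    isClosed_frontier.measurableSet.inter (measurable_norm measurableSet_Ico)
  have hFd : Pairwise (Function.onFun Disjoint F) := fun i j hij =>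
    ((hamono.pairwise_disjoint_on_Ico_succ hij).preimage _).mono
      Set.inter_subset_right Set.inter_subset_right
  have hFsum : ∑' k, Measure.hausdorffMeasure (n:ℝ) (F k) ≤
      Measure.hausdorffMeasure (n:ℝ) (frontier E) := by
    rw [← measure_iUnion hFd hFm]
    exact measure_mono (Set.iUnion_subset fun k => Set.inter_subset_left)
  have hcov : E ∩ (Metric.ball 0 q \ Metric.closedBall 0 r) ⊆
      ⋃ k, radP ⁻¹' (radP '' F k) ∩
        (Metric.ball 0 (min q (a (k+1))) \ Metric.closedBall 0 r) := by
    rintro x ⟨hxE, hxq, hxr⟩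
    have hxr' : r < ‖x‖ := by simpa using hxr
    have hx0 : x ≠ 0 := norm_pos_iff.1 (hr.trans hxr')
    obtain ⟨t, ht, htF⟩ := exists_frontier hE hR hxE hx0
    have hn : ‖x‖ ≤ ‖t • x‖ := by
      rw [norm_smul, Real.norm_of_nonneg (by linarith)]
      exact le_mul_of_one_le_left (norm_nonneg _) ht
    obtain ⟨k, hk1, hk2⟩ := exists_nat_pow_near (x := ‖t • x‖ / r)
      ((one_le_div hr).2 (hxr'.le.trans hn)) hL
    rw [le_div_iff₀' hr] at hk1
    rw [div_lt_iff₀' hr] at hk2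
    refine Set.mem_iUnion.2 ⟨k, ⟨t • x, ⟨htF, hk1, hk2⟩, radP_smul (by linarith) x⟩, ?_, hxr⟩
    rw [mem_ball_zero_iff] at hxq ⊢
    exact lt_min hxq (hn.trans_lt hk2)
  have hlayer : ∀ k, sphM n (radP '' F k) ≤
      ENNReal.ofReal ((a k)⁻¹ ^ n) * Measure.hausdorffMeasure (n:ℝ) (F k) := by
    intro k
    have h1 := ((radP_lip (V := EuclideanSpace ℝ (Fin (n+1))) (ha k)).mono (s := F k)
      (fun x hx => hx.2.1)).hausdorffMeasure_image_le (d := n) (by positivity)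
    refine (Measure.restrict_apply_le _ _).trans (h1.trans (le_of_eq ?_))
    rw [ENNReal.rpow_natCast, ENNReal.ofReal_pow (inv_nonneg.2 (ha k).le)]
    rfl
  rw [shell_vol hr hrq]
  calc ENNReal.ofReal (q ^ n) * sphM n Set.univ *
        volume (E ∩ (Metric.ball 0 q \ Metric.closedBall 0 r))
      ≤ ENNReal.ofReal (q ^ n) * sphM n Set.univ * ∑' k,
          ENNReal.ofReal ((min q (a (k+1)))^(n+1) - r^(n+1)) * coneM n (radP '' F k) := by
        gcongr
        refine (measure_mono hcov).trans ((measure_iUnion_le _).trans ?_)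
        exact ENNReal.tsum_le_tsum fun k => cone_shell _ hr (lt_min hq (ha _))
    _ = ∑' k, ENNReal.ofReal (q ^ n) * sphM n Set.univ * (
          ENNReal.ofReal ((min q (a (k+1)))^(n+1) - r^(n+1)) * coneM n (radP '' F k)) := by
        rw [ENNReal.tsum_mul_left]
    _ ≤ ∑' k, (ENNReal.ofReal (L ^ n) * (ENNReal.ofReal (q^(n+1) - r^(n+1)) * coneM n Set.univ)) *
          Measure.hausdorffMeasure (n:ℝ) (F k) := by
        refine ENNReal.tsum_le_tsum fun k => ?_
        set s := min q (a (k+1))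
        have hel := elem_ineq (n := n) (r := r) (s := s) (q := q) (a := a k) (L := L) hr
          (lt_min hq (ha _)) (min_le_left _ _) (ha k)
          ((min_le_right _ _).trans (le_of_eq (by simp only [a]; ring))) hL0 hrq
        calc _ = ENNReal.ofReal (q ^ n) * ENNReal.ofReal (s^(n+1) - r^(n+1)) *
              (coneM n (radP '' F k) * sphM n Set.univ) := by ring
          _ = ENNReal.ofReal (q ^ n) * ENNReal.ofReal (s^(n+1) - r^(n+1)) *
              (coneM n Set.univ * sphM n (radP '' F k)) := by rw [coneM_sph]
          _ ≤ ENNReal.ofReal (q ^ n) * ENNReal.ofReal (s^(n+1) - r^(n+1)) *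
              (coneM n Set.univ *
                (ENNReal.ofReal ((a k)⁻¹ ^ n) * Measure.hausdorffMeasure (n:ℝ) (F k))) := by
              gcongr; exact hlayer k
          _ = ENNReal.ofReal (q ^ n * ((s^(n+1) - r^(n+1)) * (a k)⁻¹ ^ n)) *
              (coneM n Set.univ * Measure.hausdorffMeasure (n:ℝ) (F k)) := by
              rw [ENNReal.ofReal_mul (by positivity),
                ENNReal.ofReal_mul' (pow_nonneg (inv_nonneg.2 (ha k).le) _)]
              ring
          _ ≤ ENNReal.ofReal (L ^ n * (q^(n+1) - r^(n+1))) *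
              (coneM n Set.univ * Measure.hausdorffMeasure (n:ℝ) (F k)) := by
              gcongr
          _ = _ := by
              rw [ENNReal.ofReal_mul (by positivity)]
              ring
    _ = (ENNReal.ofReal (L ^ n) * (ENNReal.ofReal (q^(n+1) - r^(n+1)) * coneM n Set.univ)) *
          ∑' k, Measure.hausdorffMeasure (n:ℝ) (F k) := ENNReal.tsum_mul_left
    _ ≤ (ENNReal.ofReal (L ^ n) * (ENNReal.ofReal (q^(n+1) - r^(n+1)) * coneM n Set.univ)) *
          Measure.hausdorffMeasure (n:ℝ) (frontier E) := by gcongr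
    _ = _ := by ring

open scoped Pointwise in
lemma sphere_scale {n : ℕ} {q : ℝ} (hq : 0 < q) :
    Measure.hausdorffMeasure (n:ℝ) (frontier (Metric.ball (0 : EuclideanSpace ℝ (Fin (n+1))) q)) =
      ENNReal.ofReal (q ^ n) * sphM n Set.univ := by
  have : frontier (Metric.ball (0 : EuclideanSpace ℝ (Fin (n+1))) q) = q • Metric.sphere 0 1 := by
    rw [frontier_ball _ hq.ne']
    ext x
    rw [Set.mem_smul_set_iff_inv_smul_mem₀ hq.ne']
    simp only [mem_sphere_zero_iff_norm, norm_smul, norm_inv, Real.norm_of_nonneg hq.le]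
    rw [← div_eq_inv_mul, div_eq_one_iff_eq hq.ne']
  rw [this, Measure.hausdorffMeasure_smul₀ (by positivity) hq.ne', sphM, Measure.restrict_apply_univ,
    NNReal.rpow_natCast, ENNReal.smul_def, smul_eq_mul, ENNReal.ofReal_pow hq.le, ENNReal.coe_pow]
  congr 2
  rw [ENNReal.ofReal, Real.toNNReal_eq_nnnorm_of_nonneg hq.le]

/-- Cheeger-type optimality of the ball: among open sets `E` compactly contained in `B_R`,
the ball `B_{r₂}` minimizes the ratio `H^{N-1}(∂E)/|E ∩ S|`, where `S` is the shell
`B_{r₂} \ closedBall r₁`; equivalently the infimum of the ratio equals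
`H^{N-1}(∂B_{r₂})/|S|` and `E = B_{r₂}` is optimal. -/
theorem cheeger_type_ball_optimal (N : ℕ) (r₁ r₂ R : ℝ)
    (hN : 2 ≤ N) (h1 : 0 < r₁) (h2 : r₁ < r₂) (h3 : r₂ < R) :
    ∀ E : Set (EuclideanSpace ℝ (Fin N)), IsOpen E → closure E ⊆ Metric.ball 0 R →
      0 < volume (E ∩ (Metric.ball (0 : EuclideanSpace ℝ (Fin N)) r₂ \ Metric.closedBall 0 r₁)) →
      Measure.hausdorffMeasure ((N:ℝ) - 1)
          (frontier (Metric.ball (0 : EuclideanSpace ℝ (Fin N)) r₂)) *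
        volume (E ∩ (Metric.ball (0 : EuclideanSpace ℝ (Fin N)) r₂ \ Metric.closedBall 0 r₁))
      ≤ Measure.hausdorffMeasure ((N:ℝ) - 1) (frontier E) *
        volume (Metric.ball (0 : EuclideanSpace ℝ (Fin N)) r₂ \ Metric.closedBall 0 r₁) := by
  intro E hE hR _
  obtain ⟨n, rfl⟩ : ∃ n, N = n + 1 := ⟨N - 1, by omega⟩
  have hd : ((n + 1 : ℕ) : ℝ) - 1 = (n : ℝ) := by push_cast; ring
  rw [hd, sphere_scale (h1.trans h2)]
  have hlim : Tendsto (fun L : ℝ => ENNReal.ofReal (L ^ n) *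
      (Measure.hausdorffMeasure (n:ℝ) (frontier E) *
        volume (Metric.ball (0 : EuclideanSpace ℝ (Fin (n+1))) r₂ \ Metric.closedBall 0 r₁)))
      (nhdsWithin 1 (Set.Ioi 1))
      (nhds (1 * (Measure.hausdorffMeasure (n:ℝ) (frontier E) *
        volume (Metric.ball (0 : EuclideanSpace ℝ (Fin (n+1))) r₂ \ Metric.closedBall 0 r₁)))) := by
    refine ENNReal.Tendsto.mul_const ?_ (Or.inl one_ne_zero)
    have hc : Continuous fun L : ℝ => ENNReal.ofReal (L ^ n) :=
      ENNReal.continuous_ofReal.comp (continuous_pow n)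
    have := (hc.tendsto 1).mono_left (nhdsWithin_le_nhds (s := Set.Ioi 1))
    simpa using this
  rw [one_mul] at hlim
  refine ge_of_tendsto hlim ?_
  filter_upwards [self_mem_nhdsWithin] with L hL
  exact main_L h1 h2 hL hE hR
end
end

section
/- Let 1 ≤ p ≤ N and 0 < γ < 1. There exists a constant C = C(N,p,γ) > 0 such that for every open set Ω ⊆ ℝ^N with R_{p,γ}(Ω) < +∞, one has λ_p(Ω) ≤ C·R_{p,γ}(Ω)^(-p); moreover, if R_{p,γ}(Ω) = +∞ then λ_p(Ω) = 0. -/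
open MeasureTheory Filter
open scoped ENNReal

noncomputable section

/-- Relative `p`-capacity of a compact set `K` inside an open set `E`:
infimum of the `p`-Dirichlet energy over smooth compactly supported functions
in `E` which are at least `1` on `K`. -/
noncomputable def pCapacity {N : ℕ} (p : ℝ) (K E : Set (EuclideanSpace ℝ (Fin N))) : ℝ :=
  sInf {c : ℝ | ∃ φ : EuclideanSpace ℝ (Fin N) → ℝ, ContDiff ℝ (⊤ : ℕ∞) φ ∧ HasCompactSupport φ ∧
    tsupport φ ⊆ E ∧ (∀ x ∈ K, 1 ≤ φ x) ∧ c = ∫ x, ‖fderiv ℝ φ x‖ ^ p}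

/-- Sharp `L^p` Poincaré constant of an open set. -/
noncomputable def lambdaP {N : ℕ} (p : ℝ) (Ω : Set (EuclideanSpace ℝ (Fin N))) : ℝ :=
  sInf {c : ℝ | ∃ φ : EuclideanSpace ℝ (Fin N) → ℝ, ContDiff ℝ (⊤ : ℕ∞) φ ∧ HasCompactSupport φ ∧
    tsupport φ ⊆ Ω ∧ (∫ x, |φ x| ^ p) = 1 ∧ c = ∫ x, ‖fderiv ℝ φ x‖ ^ p}

/-- `closedBall x₀ r \ Ω` is `(p,γ)`-negligible. -/
def IsNegligible {N : ℕ} (p γ : ℝ) (Ω : Set (EuclideanSpace ℝ (Fin N)))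
    (x₀ : EuclideanSpace ℝ (Fin N)) (r : ℝ) : Prop :=
  pCapacity p (Metric.closedBall x₀ r \ Ω) (Metric.ball x₀ (2*r)) ≤
    γ * pCapacity p (Metric.closedBall x₀ r) (Metric.ball x₀ (2*r))

/-- The `(p,γ)`-capacitary inradius of an open set, as an extended nonnegative real. -/
noncomputable def capInradius {N : ℕ} (p γ : ℝ) (Ω : Set (EuclideanSpace ℝ (Fin N))) : ℝ≥0∞ :=
  sSup {ρ : ℝ≥0∞ | ∃ r : ℝ, 0 < r ∧ ρ = ENNReal.ofReal r ∧
    ∃ x₀ : EuclideanSpace ℝ (Fin N), IsNegligible p γ Ω x₀ r}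

theorem integrable_energy {N : ℕ} {p : ℝ} (hp : 1 ≤ p) {φ : EuclideanSpace ℝ (Fin N) → ℝ}
    (h1 : ContDiff ℝ (⊤ : ℕ∞) φ) (h2 : HasCompactSupport φ) :
    Integrable (fun x => ‖fderiv ℝ φ x‖ ^ p) := by
  have hc : Continuous (fderiv ℝ φ) := h1.continuous_fderiv (by simp)
  refine Continuous.integrable_of_hasCompactSupport
    (hc.norm.rpow_const (fun _ => Or.inr (by linarith))) ?_
  exact (h2.fderiv (𝕜 := ℝ)).comp_left (g := fun L => ‖L‖ ^ p)
    (by simp [Real.zero_rpow (by linarith : p ≠ 0)])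

theorem integrable_power {N : ℕ} {p : ℝ} (hp : 1 ≤ p) {φ : EuclideanSpace ℝ (Fin N) → ℝ}
    (h1 : Continuous φ) (h2 : HasCompactSupport φ) :
    Integrable (fun x => |φ x| ^ p) := by
  refine Continuous.integrable_of_hasCompactSupport
    (h1.abs.rpow_const (fun _ => Or.inr (by linarith))) ?_
  exact h2.comp_left (g := fun L => |L| ^ p)
    (by simp [Real.zero_rpow (by linarith : p ≠ 0)])

theorem energy_nonneg {N : ℕ} (p : ℝ) (φ : EuclideanSpace ℝ (Fin N) → ℝ) :
    0 ≤ ∫ x, ‖fderiv ℝ φ x‖ ^ p :=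
  integral_nonneg fun x => Real.rpow_nonneg (norm_nonneg _) _

theorem pCapacity_le {N : ℕ} {p : ℝ} {K E : Set (EuclideanSpace ℝ (Fin N))}
    {φ : EuclideanSpace ℝ (Fin N) → ℝ} (h1 : ContDiff ℝ (⊤ : ℕ∞) φ) (h2 : HasCompactSupport φ)
    (h3 : tsupport φ ⊆ E) (h4 : ∀ x ∈ K, 1 ≤ φ x) :
    pCapacity p K E ≤ ∫ x, ‖fderiv ℝ φ x‖ ^ p := by
  refine csInf_le ⟨0, ?_⟩ ⟨φ, h1, h2, h3, h4, rfl⟩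
  rintro c ⟨ψ, -, -, -, -, rfl⟩
  exact energy_nonneg p ψ

theorem lambdaP_nonneg {N : ℕ} (p : ℝ) (Ω : Set (EuclideanSpace ℝ (Fin N))) :
    0 ≤ lambdaP p Ω := by
  refine Real.sInf_nonneg ?_
  rintro c ⟨ψ, -, -, -, -, rfl⟩
  exact energy_nonneg p ψ

theorem lambdaP_le {N : ℕ} {p : ℝ} {Ω : Set (EuclideanSpace ℝ (Fin N))}
    {φ : EuclideanSpace ℝ (Fin N) → ℝ} (h1 : ContDiff ℝ (⊤ : ℕ∞) φ) (h2 : HasCompactSupport φ)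
    (h3 : tsupport φ ⊆ Ω) (h4 : ∫ x, |φ x| ^ p = 1) :
    lambdaP p Ω ≤ ∫ x, ‖fderiv ℝ φ x‖ ^ p := by
  refine csInf_le ⟨0, ?_⟩ ⟨φ, h1, h2, h3, h4, rfl⟩
  rintro c ⟨ψ, -, -, -, -, rfl⟩
  exact energy_nonneg p ψ

/-- admissible functions exist -/
theorem exists_admissible {N : ℕ} (x₀ : EuclideanSpace ℝ (Fin N)) {r R : ℝ} (hr : 0 < r)
    (hR : r < R) :
    ∃ η : EuclideanSpace ℝ (Fin N) → ℝ, ContDiff ℝ (⊤ : ℕ∞) η ∧ HasCompactSupport η ∧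
      tsupport η ⊆ Metric.ball x₀ R ∧ (∀ x ∈ Metric.closedBall x₀ r, η x = 1) ∧
      ∀ x, 0 ≤ η x ∧ η x ≤ 1 := by
  let b : ContDiffBump x₀ := ⟨r, (r + R) / 2, hr, by linarith⟩
  refine ⟨b, b.contDiff, b.hasCompactSupport, ?_, ?_, fun x => ⟨b.nonneg, b.le_one⟩⟩
  · rw [b.tsupport_eq]
    exact Metric.closedBall_subset_ball (by change (r + R) / 2 < R; linarith)
  · intro x hx
    exact b.one_of_mem_closedBall hx

theorem exists_lt_of_pCapacity_lt {N : ℕ} {p : ℝ} {K : Set (EuclideanSpace ℝ (Fin N))}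
    (hK : K ⊆ Metric.closedBall 0 1) {c : ℝ}
    (h : pCapacity p K (Metric.ball 0 2) < c) :
    ∃ φ : EuclideanSpace ℝ (Fin N) → ℝ, ContDiff ℝ (⊤ : ℕ∞) φ ∧ HasCompactSupport φ ∧
      tsupport φ ⊆ Metric.ball 0 2 ∧ (∀ x ∈ K, 1 ≤ φ x) ∧ ∫ x, ‖fderiv ℝ φ x‖ ^ p < c := by
  obtain ⟨η, h1, h2, h3, h4, -⟩ := exists_admissible (0 : EuclideanSpace ℝ (Fin N))
    (r := 1) (R := 2) (by norm_num) (by norm_num)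
  unfold pCapacity at h
  obtain ⟨d, ⟨φ, g1, g2, g3, g4, rfl⟩, hd⟩ := exists_lt_of_csInf_lt (by
    refine ⟨∫ x, ‖fderiv ℝ η x‖ ^ p, η, h1, h2, h3, fun x hx => (h4 x (hK hx)).ge, rfl⟩) h
  exact ⟨φ, g1, g2, g3, g4, hd⟩

theorem le_pCapacity {N : ℕ} {p : ℝ} {K : Set (EuclideanSpace ℝ (Fin N))}
    (hK : K ⊆ Metric.closedBall 0 1) {c : ℝ}
    (h : ∀ φ : EuclideanSpace ℝ (Fin N) → ℝ, ContDiff ℝ (⊤ : ℕ∞) φ → HasCompactSupport φ →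
      tsupport φ ⊆ Metric.ball 0 2 → (∀ x ∈ K, 1 ≤ φ x) → c ≤ ∫ x, ‖fderiv ℝ φ x‖ ^ p) :
    c ≤ pCapacity p K (Metric.ball 0 2) := by
  by_contra hlt
  obtain ⟨φ, g1, g2, g3, g4, g5⟩ := exists_lt_of_pCapacity_lt hK (not_le.1 hlt)
  linarith [h φ g1 g2 g3 g4]

theorem rpow_add_le_weighted {p s x y : ℝ} (hp : 1 ≤ p) (hs0 : 0 < s) (hs1 : s < 1) (hx : 0 ≤ x)
    (hy : 0 ≤ y) : (x + y) ^ p ≤ (1 - s) ^ (1 - p) * x ^ p + s ^ (1 - p) * y ^ p := by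
  have h := (convexOn_rpow hp).2
    (Set.mem_Ici.2 (div_nonneg hx (by linarith : 0 ≤ 1 - s)))
    (Set.mem_Ici.2 (div_nonneg hy hs0.le))
    (by linarith : 0 ≤ 1 - s) hs0.le (by ring)
  have h1 : (1 - s) ≠ 0 := by linarith
  simp only [smul_eq_mul] at h
  rw [mul_div_cancel₀ _ h1, mul_div_cancel₀ _ hs0.ne', Real.div_rpow hx (by linarith),
    Real.div_rpow hy hs0.le] at h
  rw [Real.rpow_sub (by linarith), Real.rpow_sub hs0, Real.rpow_one, Real.rpow_one]
  calc _ ≤ _ := h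
    _ = _ := by ring

/-- one-dimensional smooth truncation -/
theorem exists_trunc (b c : ℝ) (hbc : b < c) : ∃ F : ℝ → ℝ, ContDiff ℝ (⊤ : ℕ∞) F ∧
    (∀ t, c ≤ t → F t = 0) ∧ (∀ t, b ≤ t + F t) ∧ (∀ t, -1 ≤ deriv F t ∧ deriv F t ≤ 0) := by
  let s : ℝ → ℝ := fun x => Real.smoothTransition ((c - x) / (c - b))
  have hs : ContDiff ℝ (⊤ : ℕ∞) s :=
    Real.smoothTransition.contDiff.comp ((contDiff_const.sub contDiff_id).div_const _)
  have hsc : Continuous s := hs.continuous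
  have hd : ∀ t, HasDerivAt (fun t => ∫ x in t..c, s x) (-(s t)) t := fun t =>
    intervalIntegral.integral_hasDerivAt_left (hsc.intervalIntegrable _ _)
      (hsc.stronglyMeasurableAtFilter _ _) hsc.continuousAt
  have hd' : deriv (fun t => ∫ x in t..c, s x) = fun t => -(s t) := funext fun t => (hd t).deriv
  have hs0 : ∀ t, 0 ≤ s t := fun t => Real.smoothTransition.nonneg _
  have hs1 : ∀ t, s t ≤ 1 := fun t => Real.smoothTransition.le_one _
  have hF0 : ∀ t, c ≤ t → ∫ x in t..c, s x = 0 := by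
    intro t ht
    refine intervalIntegral.integral_zero_ae (.of_forall fun x hx => ?_)
    rw [Set.uIoc_of_ge ht] at hx
    exact Real.smoothTransition.zero_of_nonpos
      (div_nonpos_of_nonpos_of_nonneg (by linarith [hx.1]) (by linarith))
  refine ⟨fun t => ∫ x in t..c, s x, ?_, hF0, ?_, ?_⟩
  · refine contDiff_infty_iff_deriv.2 ⟨fun t => (hd t).differentiableAt, ?_⟩
    rw [hd']
    exact hs.neg
  · intro t
    rcases le_or_gt c t with h | h
    · simp only [hF0 t h]; linarith
    have hnn : ∀ t, t ≤ c → 0 ≤ ∫ x in t..c, s x := fun t ht =>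
      intervalIntegral.integral_nonneg ht fun x _ => hs0 x
    rcases le_or_gt b t with h' | h'
    · have := hnn t h.le
      simp only; linarith
    · have e1 : ∫ x in t..b, s x = ∫ x in t..b, (1 : ℝ) := by
        refine intervalIntegral.integral_congr fun x hx => ?_
        rw [Set.uIcc_of_le h'.le] at hx
        refine Real.smoothTransition.one_of_one_le ?_
        rw [le_div_iff₀ (by linarith)]
        linarith [hx.2]
      have e2 := intervalIntegral.integral_add_adjacent_intervals (μ := volume)
        (hsc.intervalIntegrable t b) (hsc.intervalIntegrable b c)
      rw [e1] at e2
      simp only [intervalIntegral.integral_const, smul_eq_mul, mul_one] at e2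
      have := hnn b hbc.le
      simp only; linarith
  · intro t
    rw [hd']
    exact ⟨by simp only; linarith [hs1 t], by simp only; linarith [hs0 t]⟩

/-- positivity of the capacity of the ball -/
theorem pCapacity_ball_pos {N : ℕ} {p : ℝ} (hN : 2 ≤ N) (hp : 1 ≤ p) :
    0 < pCapacity p (Metric.closedBall (0 : EuclideanSpace ℝ (Fin N)) 1) (Metric.ball 0 2) := by
  set C : ℝ := (eLpNormLESNormFDerivOfLeConst ℝ (volume : Measure (EuclideanSpace ℝ (Fin N)))
    (Metric.ball 0 2) 1 1 : ℝ) with hC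
  have hC0 : 0 ≤ C := NNReal.coe_nonneg _
  set v₁ : ℝ := volume.real (Metric.closedBall (0 : EuclideanSpace ℝ (Fin N)) 1) with hv₁
  set v₂ : ℝ := volume.real (Metric.ball (0 : EuclideanSpace ℝ (Fin N)) 2) with hv₂
  have hv₁0 : 0 < v₁ := ENNReal.toReal_pos
    (Metric.measure_closedBall_pos _ _ one_pos).ne' measure_closedBall_lt_top.ne
  have hv₂0 : 0 ≤ v₂ := measureReal_nonneg
  set s : ℝ := v₁ / (2 * (C + 1) * (v₂ + 1)) with hs
  have hs0 : 0 < s := by positivity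
  have hsp : 0 < s ^ (1 - p) := Real.rpow_pos_of_pos hs0 _
  have key : v₁ / (2 * (C + 1) * s ^ (1 - p)) ≤
      pCapacity p (Metric.closedBall (0 : EuclideanSpace ℝ (Fin N)) 1) (Metric.ball 0 2) := by
    refine le_pCapacity subset_rfl fun φ h1 h2 h3 h4 => ?_
    have gns := eLpNorm_le_eLpNorm_fderiv (u := φ) (s := Metric.ball 0 2) (p := 1)
      (volume : Measure (EuclideanSpace ℝ (Fin N))) (h1.of_le (by simp))
      ((subset_tsupport φ).trans h3) le_rfl (by simp; omega) Metric.isBounded_ball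
    have hcf : Continuous (fderiv ℝ φ) := h1.continuous_fderiv (by simp)
    have i1 : Integrable φ := h1.continuous.integrable_of_hasCompactSupport h2
    have i2 : Integrable (fderiv ℝ φ) :=
      hcf.integrable_of_hasCompactSupport (h2.fderiv (𝕜 := ℝ))
    have g1 : ∫ x, ‖φ x‖ ≤ C * ∫ x, ‖fderiv ℝ φ x‖ := by
      have := ENNReal.toReal_mono (ENNReal.mul_ne_top ENNReal.coe_ne_top
        (by simpa using (memLp_one_iff_integrable.2 i2).eLpNorm_ne_top)) gns
      simp only [ENNReal.coe_one, ENNReal.toReal_mul, ENNReal.coe_toReal] at this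
      rwa [toReal_eLpNorm i1.aestronglyMeasurable, toReal_eLpNorm i2.aestronglyMeasurable,
        lpNorm_one_eq_integral_norm i1.aestronglyMeasurable,
        lpNorm_one_eq_integral_norm i2.aestronglyMeasurable] at this
    have g2 : v₁ ≤ ∫ x, ‖φ x‖ := by
      calc v₁ = ∫ x in Metric.closedBall (0 : EuclideanSpace ℝ (Fin N)) 1, (1 : ℝ) := by
            simp [hv₁]
        _ ≤ ∫ x in Metric.closedBall (0 : EuclideanSpace ℝ (Fin N)) 1, ‖φ x‖ := by
            refine setIntegral_mono_on (integrableOn_const measure_closedBall_lt_top.ne)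
              i1.norm.integrableOn measurableSet_closedBall fun x hx => ?_
            exact (h4 x hx).trans (Real.le_norm_self _)
        _ ≤ _ := setIntegral_le_integral i1.norm (.of_forall fun x => norm_nonneg _)
    have ie := integrable_energy hp h1 h2
    have g3 : ∫ x, ‖fderiv ℝ φ x‖ ≤ s * v₂ + s ^ (1 - p) * ∫ x, ‖fderiv ℝ φ x‖ ^ p := by
      have e1 : ∫ x, ‖fderiv ℝ φ x‖ = ∫ x in Metric.ball 0 2, ‖fderiv ℝ φ x‖ := by
        refine (setIntegral_eq_integral_of_forall_compl_eq_zero fun x hx => ?_).symm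
        have : x ∉ tsupport φ := fun h => hx (h3 h)
        simp [fderiv_of_notMem_tsupport ℝ this]
      have e2 : ∫ x in Metric.ball (0 : EuclideanSpace ℝ (Fin N)) 2, ‖fderiv ℝ φ x‖ ≤
          ∫ x in Metric.ball (0 : EuclideanSpace ℝ (Fin N)) 2,
            (s + s ^ (1 - p) * ‖fderiv ℝ φ x‖ ^ p) := by
        refine integral_mono i2.norm.integrableOn
          ((integrableOn_const measure_ball_lt_top.ne).add (ie.const_mul _).integrableOn)
          fun x => ?_
        have hy := norm_nonneg (fderiv ℝ φ x)
        simp only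
        generalize ‖fderiv ℝ φ x‖ = y at hy
        rcases le_or_gt y s with h | h
        · have : 0 ≤ s ^ (1 - p) * y ^ p := by positivity
          linarith
        · have hy' : 0 < y := hs0.trans h
          have a1 : y ^ (1 - p) ≤ s ^ (1 - p) :=
            Real.rpow_le_rpow_of_nonpos hs0 h.le (by linarith)
          have a2 : y ^ (1 - p) * y ^ p = y := by
            rw [← Real.rpow_add hy']; simp
          have a3 : y ^ (1 - p) * y ^ p ≤ s ^ (1 - p) * y ^ p := by gcongr
          linarith
      have ic : IntegrableOn (fun _ : EuclideanSpace ℝ (Fin N) => s)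
        (Metric.ball (0 : EuclideanSpace ℝ (Fin N)) 2) :=
        integrableOn_const measure_ball_lt_top.ne
      rw [integral_add ic (ie.const_mul _).integrableOn] at e2
      have e3 : ∫ x in Metric.ball (0 : EuclideanSpace ℝ (Fin N)) 2,
          s ^ (1 - p) * ‖fderiv ℝ φ x‖ ^ p ≤ ∫ x, s ^ (1 - p) * ‖fderiv ℝ φ x‖ ^ p :=
        setIntegral_le_integral (ie.const_mul _) (.of_forall fun x => by positivity)
      rw [integral_const_mul, integral_const_mul] at e3
      rw [integral_const_mul] at e2
      have e4 : ∫ x in Metric.ball (0 : EuclideanSpace ℝ (Fin N)) 2, s = s * v₂ := by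
        simp [hv₂, mul_comm]
      linarith
    have hE := energy_nonneg p φ
    generalize (∫ x, ‖fderiv ℝ φ x‖ ^ p) = e at *
    rw [div_le_iff₀ (by positivity)]
    have h5 : C * (s * v₂) ≤ v₁ / 2 := by
      have : (C + 1) * (s * (v₂ + 1)) = v₁ / 2 := by
        rw [hs]; field_simp
      rw [← this]
      gcongr <;> linarith
    have h6 : C * (s ^ (1 - p) * e) ≤ (C + 1) * (s ^ (1 - p) * e) := by gcongr; linarith
    have h7 := mul_le_mul_of_nonneg_left g3 hC0
    nlinarith
  exact lt_of_lt_of_le (by positivity) key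

/-- continuity of the capacity of concentric balls -/
theorem exists_theta {N : ℕ} {p κ : ℝ} (hp : 1 ≤ p) (hκ0 : 0 ≤ κ) (hκ : κ < 1) :
    ∃ θ : ℝ, 0 < θ ∧ θ < 1 ∧
      κ * pCapacity p (Metric.closedBall (0 : EuclideanSpace ℝ (Fin N)) 1) (Metric.ball 0 2) ≤
        pCapacity p (Metric.closedBall (0 : EuclideanSpace ℝ (Fin N)) θ) (Metric.ball 0 2) := by
  obtain ⟨χ, hχ1, hχ2, hχ3, hχ4, hχ5⟩ := exists_admissible (0 : EuclideanSpace ℝ (Fin N))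
    (r := 1) (R := 2) (by norm_num) (by norm_num)
  let g : EuclideanSpace ℝ (Fin N) → EuclideanSpace ℝ (Fin N) := fun x => χ x • x
  have hg1 : ContDiff ℝ (⊤ : ℕ∞) g := hχ1.smul contDiff_id
  have hg2 : HasCompactSupport g := hχ2.smul_right
  obtain ⟨L, hL⟩ := (hg2.fderiv (𝕜 := ℝ)).exists_bound_of_continuous
    (hg1.continuous_fderiv (by simp))
  have hL0 : 0 ≤ L := (norm_nonneg _).trans (hL 0)
  -- choice of ε
  obtain ⟨ε, hε0, hε⟩ : ∃ ε : ℝ, 0 < ε ∧ κ * (1 + ε) ^ p ≤ 1 - ε := by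
    have hc : ContinuousAt (fun ε : ℝ => κ * (1 + ε) ^ p - (1 - ε)) 0 := by
      refine ContinuousAt.sub (continuousAt_const.mul ?_) (by fun_prop)
      exact ContinuousAt.rpow_const (by fun_prop) (Or.inr (by linarith))
    have h0 : (fun ε : ℝ => κ * (1 + ε) ^ p - (1 - ε)) 0 < 0 := by simp; linarith
    have hev := hc.eventually_lt continuousAt_const h0
    obtain ⟨ε, h1, h2⟩ := ((hev.filter_mono nhdsWithin_le_nhds).and
      (self_mem_nhdsWithin : Set.Ioi (0 : ℝ) ∈ nhdsWithin 0 (Set.Ioi 0))).exists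
    exact ⟨ε, h2, by linarith⟩
  obtain ⟨δ, hδ0, hδ⟩ : ∃ δ : ℝ, 0 < δ ∧
      ∀ A : EuclideanSpace ℝ (Fin N) →L[ℝ] EuclideanSpace ℝ (Fin N),
        ‖A - ContinuousLinearMap.id ℝ _‖ < δ → 1 - ε ≤ |A.det| := by
    have hc : Continuous fun A : EuclideanSpace ℝ (Fin N) →L[ℝ] EuclideanSpace ℝ (Fin N) =>
      |A.det| := (ContinuousLinearMap.continuous_det).abs
    have h0 : 1 - ε < |(ContinuousLinearMap.id ℝ (EuclideanSpace ℝ (Fin N))).det| := by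
      simp [ContinuousLinearMap.det]; linarith
    obtain ⟨δ, h1, h2⟩ := Metric.eventually_nhds_iff.1
      (continuousAt_const.eventually_lt hc.continuousAt h0)
    exact ⟨δ, h1, fun A hA => (h2 (by rwa [dist_eq_norm])).le⟩
  set m := min δ (min ε 1) with hm
  have hm0 : 0 < m := by simp [hm, hδ0, hε0]
  have hmδ : m ≤ δ := min_le_left _ _
  have hmε : m ≤ ε := (min_le_right _ _).trans (min_le_left _ _)
  have hm1 : m ≤ 1 := (min_le_right _ _).trans (min_le_right _ _)
  set t := m / (2 * (L + 1)) with ht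
  have ht0 : 0 < t := by positivity
  have htL : t * (L + 1) = m / 2 := by rw [ht]; field_simp
  have htL' : t * L < m := by nlinarith
  have ht1 : t < 1 := by nlinarith
  let Φ : EuclideanSpace ℝ (Fin N) → EuclideanSpace ℝ (Fin N) := fun x => x - t • g x
  have hΦ1 : ContDiff ℝ (⊤ : ℕ∞) Φ := contDiff_id.sub (hg1.const_smul t)
  have hgd : ∀ x, HasFDerivAt g (fderiv ℝ g x) x := fun x =>
    (hg1.differentiable (by simp) x).hasFDerivAt
  have hΦd : ∀ x, HasFDerivAt Φ (ContinuousLinearMap.id ℝ _ - t • fderiv ℝ g x) x := fun x =>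
    (hasFDerivAt_id x).sub ((hgd x).const_smul t)
  have htD : ∀ x, ‖t • fderiv ℝ g x‖ ≤ t * L := fun x => by
    rw [norm_smul, Real.norm_of_nonneg ht0.le]
    exact mul_le_mul_of_nonneg_left (hL x) ht0.le
  have hinj : Function.Injective Φ := by
    intro x y hxy
    have h1 : ‖g x - g y‖ ≤ L * ‖x - y‖ :=
      convex_univ.norm_image_sub_le_of_norm_fderiv_le (𝕜 := ℝ)
        (fun z _ => (hgd z).differentiableAt) (fun z _ => hL z) (Set.mem_univ y) (Set.mem_univ x)
    have h2 : x - y = t • (g x - g y) := by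
      have : x - t • g x = y - t • g y := hxy
      rw [smul_sub]
      rw [sub_eq_sub_iff_add_eq_add] at this ⊢
      rw [this]; abel
    have h3 : ‖x - y‖ = t * ‖g x - g y‖ := by
      conv_lhs => rw [h2]
      rw [norm_smul, Real.norm_of_nonneg ht0.le]
    have h4 : ‖x - y‖ ≤ t * L * ‖x - y‖ := by
      rw [mul_assoc]
      calc ‖x - y‖ = _ := h3
        _ ≤ _ := mul_le_mul_of_nonneg_left h1 ht0.le
    have h5 : ‖x - y‖ = 0 := by
      by_contra hne
      have : 0 < ‖x - y‖ := lt_of_le_of_ne (norm_nonneg _) (Ne.symm hne)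
      nlinarith
    exact sub_eq_zero.1 (norm_eq_zero.1 h5)
  have hΦout : ∀ x, x ∉ Metric.ball (0 : EuclideanSpace ℝ (Fin N)) 2 → Φ x = x := by
    intro x hx
    have : χ x = 0 := by
      by_contra h
      exact hx (hχ3 (subset_tsupport _ h))
    simp [Φ, g, this]
  refine ⟨1 - t, by linarith, by linarith, ?_⟩
  refine le_pCapacity (Metric.closedBall_subset_closedBall (by linarith)) fun φ h1 h2 h3 h4 => ?_
  have hsub : tsupport (φ ∘ Φ) ⊆ Metric.ball 0 2 := by
    refine (tsupport_comp_subset_preimage φ hΦ1.continuous).trans fun x hx => ?_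
    by_contra hx'
    have : Φ x ∈ tsupport φ := hx
    rw [hΦout x hx'] at this
    exact hx' (h3 this)
  have hcs : HasCompactSupport (φ ∘ Φ) :=
    (isCompact_closedBall (0 : EuclideanSpace ℝ (Fin N)) 2).of_isClosed_subset
      (isClosed_tsupport _) (hsub.trans Metric.ball_subset_closedBall)
  have hcap := pCapacity_le (p := p) (h1.comp hΦ1) hcs hsub (fun x hx => by
    refine h4 _ ?_
    have : Φ x = (1 - t) • x := by simp [Φ, g, hχ4 x hx, sub_smul]
    rw [mem_closedBall_zero_iff] at hx ⊢
    rw [this, norm_smul, Real.norm_of_nonneg (by linarith)]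
    nlinarith : ∀ x ∈ Metric.closedBall (0 : EuclideanSpace ℝ (Fin N)) 1, 1 ≤ (φ ∘ Φ) x)
  let h : EuclideanSpace ℝ (Fin N) → ℝ := fun x => ‖fderiv ℝ φ x‖ ^ p
  have hh0 : ∀ x, 0 ≤ h x := fun x => Real.rpow_nonneg (norm_nonneg _) _
  have hhc : Continuous h := (h1.continuous_fderiv (by simp)).norm.rpow_const
    (fun _ => Or.inr (by linarith))
  have hhi : Integrable h := integrable_energy hp h1 h2
  have hhΦ : Integrable (fun x => h (Φ x)) := by
    refine Continuous.integrable_of_hasCompactSupport (hhc.comp hΦ1.continuous) ?_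
    refine HasCompactSupport.intro (isCompact_closedBall (0 : EuclideanSpace ℝ (Fin N)) 2) ?_
    intro x hx
    have hx' : x ∉ Metric.ball (0 : EuclideanSpace ℝ (Fin N)) 2 :=
      fun h => hx (Metric.ball_subset_closedBall h)
    have : x ∉ tsupport φ := fun h => hx' (h3 h)
    simp only [h]
    rw [hΦout x hx', fderiv_of_notMem_tsupport ℝ this]
    simp [Real.zero_rpow (by linarith : p ≠ 0)]
  have e1 : ∫ x, ‖fderiv ℝ (φ ∘ Φ) x‖ ^ p ≤ (1 + ε) ^ p * ∫ x, h (Φ x) := by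
    rw [← integral_const_mul]
    refine integral_mono (integrable_energy hp (h1.comp hΦ1) hcs) (hhΦ.const_mul _) fun x => ?_
    simp only [h]
    rw [← Real.mul_rpow (by linarith) (norm_nonneg _)]
    refine Real.rpow_le_rpow (norm_nonneg _) ?_ (by linarith)
    rw [((h1.differentiable (by simp) (Φ x)).hasFDerivAt.comp x (hΦd x)).fderiv]
    refine (ContinuousLinearMap.opNorm_comp_le _ _).trans ?_
    rw [mul_comm]
    refine mul_le_mul_of_nonneg_right ?_ (norm_nonneg _)
    refine (norm_sub_le _ _).trans ?_
    linarith [htD x, ContinuousLinearMap.norm_id_le (𝕜 := ℝ) (E := EuclideanSpace ℝ (Fin N))]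
  have e2 : (1 - ε) * ∫ x, h (Φ x) ≤ ∫ x, h x := by
    have cv := integral_image_eq_integral_abs_det_fderiv_smul
      (volume : Measure (EuclideanSpace ℝ (Fin N))) MeasurableSet.univ
      (fun x _ => (hΦd x).hasFDerivWithinAt) hinj.injOn h
    have cvi := (integrableOn_image_iff_integrableOn_abs_det_fderiv_smul
      (volume : Measure (EuclideanSpace ℝ (Fin N))) MeasurableSet.univ
      (fun x _ => (hΦd x).hasFDerivWithinAt) hinj.injOn h).1 hhi.integrableOn
    rw [integrableOn_univ] at cvi
    rw [setIntegral_univ] at cv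
    calc (1 - ε) * ∫ x, h (Φ x) = ∫ x, (1 - ε) * h (Φ x) := (integral_const_mul _ _).symm
      _ ≤ ∫ x, |(ContinuousLinearMap.id ℝ _ - t • fderiv ℝ g x).det| • h (Φ x) := by
          refine integral_mono (hhΦ.const_mul _) cvi fun x => ?_
          refine mul_le_mul_of_nonneg_right (hδ _ ?_) (hh0 _)
          rw [sub_sub_cancel_left, norm_neg]
          linarith [htD x]
      _ = ∫ x in Φ '' Set.univ, h x := cv.symm
      _ ≤ ∫ x, h x := setIntegral_le_integral hhi (.of_forall hh0)
  have hI : 0 ≤ ∫ x, h (Φ x) := integral_nonneg fun x => hh0 _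
  calc _ ≤ κ * ((1 + ε) ^ p * ∫ x, h (Φ x)) :=
        mul_le_mul_of_nonneg_left (hcap.trans e1) hκ0
    _ = κ * (1 + ε) ^ p * ∫ x, h (Φ x) := by ring
    _ ≤ (1 - ε) * ∫ x, h (Φ x) := mul_le_mul_of_nonneg_right hε hI
    _ ≤ _ := e2

/-- scaling of the energy -/
theorem energy_scale {N : ℕ} {p : ℝ} {φ : EuclideanSpace ℝ (Fin N) → ℝ}
    (x₀ : EuclideanSpace ℝ (Fin N)) {r : ℝ} (hr : 0 < r) :
    ∫ y, ‖fderiv ℝ (fun y => φ (x₀ + r • y)) y‖ ^ p =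
      r ^ p * (r ^ N)⁻¹ * ∫ x, ‖fderiv ℝ φ x‖ ^ p := by
  have h1 : ∀ y, ‖fderiv ℝ (fun y => φ (x₀ + r • y)) y‖ ^ p =
      r ^ p * ‖fderiv ℝ φ (x₀ + r • y)‖ ^ p := by
    intro y
    have := fderiv_comp_smul (𝕜 := ℝ) (f := fun z => φ (x₀ + z)) (x := y) r
    rw [this, fderiv_comp_add_left, norm_smul, Real.norm_of_nonneg hr.le,
      Real.mul_rpow hr.le (norm_nonneg _)]
  simp_rw [h1]
  rw [integral_const_mul]
  rw [Measure.integral_comp_smul volume (fun z => ‖fderiv ℝ φ (x₀ + z)‖ ^ p) r,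
    integral_add_left_eq_self (fun z => ‖fderiv ℝ φ z‖ ^ p) x₀]
  rw [abs_of_pos (by positivity)]
  simp only [finrank_euclideanSpace, Fintype.card_fin, smul_eq_mul]
  ring

theorem power_scale {N : ℕ} {p : ℝ} {φ : EuclideanSpace ℝ (Fin N) → ℝ}
    (x₀ : EuclideanSpace ℝ (Fin N)) {r : ℝ} (hr : 0 < r) :
    ∫ y, |φ (x₀ + r • y)| ^ p = (r ^ N)⁻¹ * ∫ x, |φ x| ^ p := by
  rw [Measure.integral_comp_smul volume (fun z => |φ (x₀ + z)| ^ p) r,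
    integral_add_left_eq_self (fun z => |φ z| ^ p) x₀]
  rw [abs_of_pos (by positivity)]
  simp only [finrank_euclideanSpace, Fintype.card_fin, smul_eq_mul]

theorem admissible_scale {N : ℕ} {φ : EuclideanSpace ℝ (Fin N) → ℝ}
    (x₀ : EuclideanSpace ℝ (Fin N)) {r : ℝ} (hr : 0 < r) {E : Set (EuclideanSpace ℝ (Fin N))}
    (h1 : ContDiff ℝ (⊤ : ℕ∞) φ) (h2 : HasCompactSupport φ) (h3 : tsupport φ ⊆ E) :
    ContDiff ℝ (⊤ : ℕ∞) (fun y => φ (x₀ + r • y)) ∧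
      HasCompactSupport (fun y => φ (x₀ + r • y)) ∧
      tsupport (fun y => φ (x₀ + r • y)) ⊆ (fun y => x₀ + r • y) ⁻¹' E := by
  refine ⟨h1.comp (contDiff_const.add (contDiff_id.const_smul r)), ?_, ?_⟩
  · exact h2.comp_homeomorph ((Homeomorph.smulOfNeZero r hr.ne').trans (Homeomorph.addLeft x₀))
  · refine (tsupport_comp_subset_preimage φ (f := fun y => x₀ + r • y) (by fun_prop)).trans ?_
    exact Set.preimage_mono h3

theorem pCapacity_scale_le {N : ℕ} {p : ℝ} (x₀ : EuclideanSpace ℝ (Fin N)) {r : ℝ} (hr : 0 < r)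
    (K E : Set (EuclideanSpace ℝ (Fin N))) {c : ℝ}
    (hc : c ∈ {c : ℝ | ∃ φ : EuclideanSpace ℝ (Fin N) → ℝ, ContDiff ℝ (⊤ : ℕ∞) φ ∧
      HasCompactSupport φ ∧
      tsupport φ ⊆ E ∧ (∀ x ∈ K, 1 ≤ φ x) ∧ c = ∫ x, ‖fderiv ℝ φ x‖ ^ p}) :
    (r ^ p * (r ^ N)⁻¹) * c ∈ {c : ℝ | ∃ φ : EuclideanSpace ℝ (Fin N) → ℝ,
      ContDiff ℝ (⊤ : ℕ∞) φ ∧ HasCompactSupport φ ∧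
      tsupport φ ⊆ ((fun y => x₀ + r • y) ⁻¹' E) ∧
      (∀ x ∈ ((fun y => x₀ + r • y) ⁻¹' K), 1 ≤ φ x) ∧ c = ∫ x, ‖fderiv ℝ φ x‖ ^ p} := by
  obtain ⟨φ, h1, h2, h3, h4, rfl⟩ := hc
  obtain ⟨g1, g2, g3⟩ := admissible_scale x₀ hr h1 h2 h3
  exact ⟨_, g1, g2, g3, fun x hx => h4 _ hx, (energy_scale x₀ hr).symm⟩

theorem pCapacity_scale {N : ℕ} {p : ℝ} (x₀ : EuclideanSpace ℝ (Fin N)) {r : ℝ} (hr : 0 < r)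
    (K E : Set (EuclideanSpace ℝ (Fin N))) :
    pCapacity p ((fun y => x₀ + r • y) ⁻¹' K) ((fun y => x₀ + r • y) ⁻¹' E) =
      (r ^ p * (r ^ N)⁻¹) * pCapacity p K E := by
  have hk : 0 < r ^ p * (r ^ N)⁻¹ := by positivity
  unfold pCapacity
  rw [← smul_eq_mul, ← Real.sInf_smul_of_nonneg hk.le]
  congr 1
  refine Set.Subset.antisymm ?_ ?_
  · intro c hc
    have := pCapacity_scale_le (-(r⁻¹ • x₀)) (inv_pos.2 hr) _ _ hc
    have hinv : ∀ S : Set (EuclideanSpace ℝ (Fin N)),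
        (fun y => -(r⁻¹ • x₀) + r⁻¹ • y) ⁻¹' ((fun y => x₀ + r • y) ⁻¹' S) = S := by
      intro S
      ext x
      simp [hr.ne', smul_smul]
    rw [hinv, hinv] at this
    refine Set.mem_smul_set.2 ⟨_, this, ?_⟩
    rw [smul_eq_mul, Real.inv_rpow hr.le, inv_pow, inv_inv]
    have : r ^ p ≠ 0 := (Real.rpow_pos_of_pos hr p).ne'
    field_simp
  · rintro _ ⟨c, hc, rfl⟩
    exact pCapacity_scale_le x₀ hr K E hc

theorem isNegligible_scale {N : ℕ} {p γ : ℝ} {Ω : Set (EuclideanSpace ℝ (Fin N))}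
    {x₀ : EuclideanSpace ℝ (Fin N)} {r : ℝ} (hr : 0 < r) (h : IsNegligible p γ Ω x₀ r) :
    pCapacity p (Metric.closedBall 0 1 \ (fun y => x₀ + r • y) ⁻¹' Ω) (Metric.ball 0 2) ≤
      γ * pCapacity p (Metric.closedBall (0 : EuclideanSpace ℝ (Fin N)) 1) (Metric.ball 0 2) := by
  have hk : 0 < r ^ p * (r ^ N)⁻¹ := by positivity
  have e1 : (fun y => x₀ + r • y) ⁻¹' (Metric.closedBall x₀ r) = Metric.closedBall 0 1 := by
    ext y
    simp [dist_eq_norm, norm_smul, abs_of_pos hr]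
    constructor <;> intro h <;> nlinarith
  have e2 : (fun y => x₀ + r • y) ⁻¹' (Metric.ball x₀ (2 * r)) = Metric.ball 0 2 := by
    ext y
    simp [dist_eq_norm, norm_smul, abs_of_pos hr]
    constructor <;> intro h <;> nlinarith
  have e3 := pCapacity_scale (p := p) x₀ hr (Metric.closedBall x₀ r) (Metric.ball x₀ (2 * r))
  have e4 := pCapacity_scale (p := p) x₀ hr (Metric.closedBall x₀ r \ Ω) (Metric.ball x₀ (2 * r))
  rw [Set.preimage_sdiff] at e4
  rw [e1, e2] at e3 e4
  rw [e3, e4]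
  unfold IsNegligible at h
  calc _ ≤ _ := mul_le_mul_of_nonneg_left h hk.le
    _ = _ := by ring

theorem lambdaP_le_div {N : ℕ} {p : ℝ} (hp : 1 ≤ p) {Ω : Set (EuclideanSpace ℝ (Fin N))}
    {φ : EuclideanSpace ℝ (Fin N) → ℝ} (h1 : ContDiff ℝ (⊤ : ℕ∞) φ) (h2 : HasCompactSupport φ)
    (h3 : tsupport φ ⊆ Ω) (h4 : 0 < ∫ x, |φ x| ^ p) :
    lambdaP p Ω ≤ (∫ x, ‖fderiv ℝ φ x‖ ^ p) / ∫ x, |φ x| ^ p := by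
  set m := ∫ x, |φ x| ^ p with hm
  set k := m ^ (-(1 / p)) with hk
  have hk0 : 0 < k := Real.rpow_pos_of_pos h4 _
  have hkp : k ^ p = m⁻¹ := by
    rw [hk, ← Real.rpow_mul h4.le, neg_mul, one_div, inv_mul_cancel₀ (by linarith),
      Real.rpow_neg_one]
  have := lambdaP_le (p := p) (φ := fun x => k * φ x) (Ω := Ω) (contDiff_const.mul h1)
    h2.mul_left ((tsupport_mul_subset_right (f := fun _ => k) (g := φ)).trans h3) (by
      simp_rw [abs_mul, abs_of_pos hk0, Real.mul_rpow hk0.le (abs_nonneg _)]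
      rw [integral_const_mul, hkp, ← hm, inv_mul_cancel₀ h4.ne'])
  refine this.trans (le_of_eq ?_)
  have e : ∀ x, ‖fderiv ℝ (fun x => k * φ x) x‖ ^ p = m⁻¹ * ‖fderiv ℝ φ x‖ ^ p := by
    intro x
    rw [fderiv_const_mul (h1.differentiable (by simp) x), norm_smul, Real.norm_of_nonneg hk0.le,
      Real.mul_rpow hk0.le (norm_nonneg _), hkp]
  simp_rw [e]
  rw [integral_const_mul, div_eq_inv_mul]

set_option maxHeartbeats 1000000 in
/-- the key estimate at unit scale -/
theorem unit_estimate {N : ℕ} {p γ : ℝ} (hN : 2 ≤ N) (hp : 1 ≤ p) (hγ0 : 0 < γ) (hγ1 : γ < 1) :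
    ∃ M : ℝ, 0 < M ∧ ∀ Ω : Set (EuclideanSpace ℝ (Fin N)),
      pCapacity p (Metric.closedBall 0 1 \ Ω) (Metric.ball 0 2) ≤
        γ * pCapacity p (Metric.closedBall (0 : EuclideanSpace ℝ (Fin N)) 1) (Metric.ball 0 2) →
      ∃ ψ : EuclideanSpace ℝ (Fin N) → ℝ, ContDiff ℝ (⊤ : ℕ∞) ψ ∧ HasCompactSupport ψ ∧
        tsupport ψ ⊆ Ω ∧ 0 < ∫ x, |ψ x| ^ p ∧
        ∫ x, ‖fderiv ℝ ψ x‖ ^ p ≤ M * ∫ x, |ψ x| ^ p := by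
  set c₁ := pCapacity p (Metric.closedBall (0 : EuclideanSpace ℝ (Fin N)) 1) (Metric.ball 0 2)
    with hc₁
  have hc₁0 : 0 < c₁ := pCapacity_ball_pos hN hp
  -- constants γ < γ₁ < γ₂ < γ₃ < κ < 1
  obtain ⟨γ₁, hγγ₁, hγ₁1⟩ := exists_between hγ1
  obtain ⟨γ₂, hγ₁₂, hγ₂1⟩ := exists_between hγ₁1
  obtain ⟨γ₃, hγ₂₃, hγ₃1⟩ := exists_between hγ₂1
  obtain ⟨κ, hγ₃κ, hκ1⟩ := exists_between hγ₃1
  obtain ⟨θ, hθ0, hθ1, hθ⟩ := exists_theta (N := N) hp (by linarith : 0 ≤ κ) hκ1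
  rw [← hc₁] at hθ
  -- choice of a
  obtain ⟨a, ha1, ha⟩ : ∃ a : ℝ, 1 < a ∧ a ^ p * γ₁ ≤ γ₂ := by
    have hc : ContinuousAt (fun a : ℝ => a ^ p * γ₁) 1 :=
      (ContinuousAt.rpow_const continuousAt_id (Or.inl one_ne_zero)).mul continuousAt_const
    have hev := hc.eventually_lt (continuousAt_const (y := γ₂)) (by simpa using hγ₁₂)
    obtain ⟨a, h1, h2⟩ := ((hev.filter_mono nhdsWithin_le_nhds).and
      (self_mem_nhdsWithin : Set.Ioi (1 : ℝ) ∈ nhdsWithin 1 (Set.Ioi 1))).exists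
    exact ⟨a, h2, h1.le⟩
  -- choice of s
  obtain ⟨s, hs0, hs1, hs⟩ : ∃ s : ℝ, 0 < s ∧ s < 1 ∧ (1 - s) ^ (1 - p) * γ₂ ≤ γ₃ := by
    have hc : ContinuousAt (fun s : ℝ => (1 - s) ^ (1 - p) * γ₂) 0 :=
      (ContinuousAt.rpow_const (by fun_prop) (Or.inl (by simp))).mul continuousAt_const
    have hev := hc.eventually_lt (continuousAt_const (y := γ₃)) (by simpa using hγ₂₃)
    obtain ⟨s, h1, h2⟩ := ((hev.filter_mono nhdsWithin_le_nhds).and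
      (Ioo_mem_nhdsGT (zero_lt_one' ℝ))).exists
    exact ⟨s, h2.1, h2.2, h1.le⟩
  obtain ⟨b, hb1, hba⟩ := exists_between ha1
  obtain ⟨F, hF1, hF2, hF3, hF4⟩ := exists_trunc 1 b hb1
  obtain ⟨G, hG1, hG2, hG3, hG4⟩ := exists_trunc (-2) (-1) (by norm_num)
  have hFd : Differentiable ℝ F := hF1.differentiable (by simp)
  have hGd : Differentiable ℝ G := hG1.differentiable (by simp)
  have hFanti : Antitone F := antitone_of_deriv_nonpos hFd fun t => (hF4 t).2
  have hF0 : ∀ t, 0 ≤ F t := fun t => by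
    rw [← hF2 (max t b) (le_max_right _ _)]
    exact hFanti (le_max_left _ _)
  have hFW : ∀ t, -2 ≤ t → F t ≤ F (-2) := fun t ht => hFanti ht
  set W := F (-2) with hW
  have hW0 : 0 ≤ W := hF0 _
  -- cutoffs
  obtain ⟨θ', hθθ', hθ'1⟩ := exists_between hθ1
  have hθ'0 : 0 < θ' := hθ0.trans hθθ'
  obtain ⟨η₁, hη11, hη12, hη13, hη14, hη15⟩ :=
    exists_admissible (0 : EuclideanSpace ℝ (Fin N)) hθ'0 hθ'1
  obtain ⟨η₂, hη21, hη22, hη23, hη24, hη25⟩ :=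
    exists_admissible (0 : EuclideanSpace ℝ (Fin N)) hθ0 hθθ'
  obtain ⟨G₂, hG₂⟩ := (hη22.fderiv (𝕜 := ℝ)).exists_bound_of_continuous
    (hη21.continuous_fderiv (by simp))
  have hG₂0 : 0 ≤ G₂ := (norm_nonneg _).trans (hG₂ 0)
  set I₁ := ∫ x, ‖fderiv ℝ η₁ x‖ ^ p with hI₁
  have hI₁0 : 0 ≤ I₁ := energy_nonneg p η₁
  have hD0 : 0 < s ^ (1 - p) * (G₂ + 1) ^ p := by positivity
  set m₀ := (κ - γ₃) * c₁ / (s ^ (1 - p) * (G₂ + 1) ^ p) with hm₀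
  have hm₀0 : 0 < m₀ := div_pos (mul_pos (by linarith) hc₁0) hD0
  set U := (1 - 1 / 2 : ℝ) ^ (1 - p) * (γ₂ * c₁) + (1 / 2 : ℝ) ^ (1 - p) * (W ^ p * I₁) with hU
  have hγ₂0 : 0 < γ₂ := by linarith
  have hU0 : 0 < U := by
    have : 0 < (1 - 1 / 2 : ℝ) ^ (1 - p) := Real.rpow_pos_of_pos (by norm_num) _
    have h2 : 0 ≤ (1 / 2 : ℝ) ^ (1 - p) * (W ^ p * I₁) := by positivity
    have h3 : 0 < (1 - 1 / 2 : ℝ) ^ (1 - p) * (γ₂ * c₁) := by positivity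
    linarith
  refine ⟨U / m₀, by positivity, fun Ω hΩ => ?_⟩
  obtain ⟨φ₀, g1, g2, g3, g4, g5⟩ := exists_lt_of_pCapacity_lt Set.sdiff_subset
    (lt_of_le_of_lt hΩ (mul_lt_mul_of_pos_right hγγ₁ hc₁0))
  -- the truncated function u
  let T : ℝ → ℝ := fun t => t + G t
  have hT1 : ContDiff ℝ (⊤ : ℕ∞) T := contDiff_id.add hG1
  have hTd : ∀ t, HasDerivAt T (1 + deriv G t) t := fun t =>
    (hasDerivAt_id t).add (hGd t).hasDerivAt
  have hT0 : T 0 = 0 := by simp [T, hG2 0 (by norm_num)]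
  let u : EuclideanSpace ℝ (Fin N) → ℝ := fun x => T (a * φ₀ x)
  have hu1 : ContDiff ℝ (⊤ : ℕ∞) u := hT1.comp (contDiff_const.mul g1)
  have hu2 : HasCompactSupport u :=
    HasCompactSupport.comp_left (g := fun t => T (a * t)) g2 (by simp [hT0])
  have hu3 : tsupport u ⊆ Metric.ball 0 2 :=
    (tsupport_comp_subset (g := fun t => T (a * t)) (by simp [hT0]) φ₀).trans g3
  have hu4 : ∀ x ∈ Metric.closedBall 0 1 \ Ω, a ≤ u x := by
    intro x hx
    have h1 : a ≤ a * φ₀ x := le_mul_of_one_le_right (by linarith) (g4 x hx)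
    simp only [u, T]
    rw [hG2 _ (by linarith)]
    linarith
  have hu5 : ∀ x, -2 ≤ u x := fun x => hG3 _
  have hud : ∀ x, HasFDerivAt u (fderiv ℝ u x) x := fun x =>
    (hu1.differentiable (by simp) x).hasFDerivAt
  have huE : ∫ x, ‖fderiv ℝ u x‖ ^ p ≤ γ₂ * c₁ := by
    have h1 : ∫ x, ‖fderiv ℝ u x‖ ^ p ≤ a ^ p * ∫ x, ‖fderiv ℝ φ₀ x‖ ^ p := by
      rw [← integral_const_mul]
      refine integral_mono (integrable_energy hp hu1 hu2)
        ((integrable_energy hp g1 g2).const_mul _) fun x => ?_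
      simp only
      rw [← Real.mul_rpow (by linarith) (norm_nonneg _)]
      refine Real.rpow_le_rpow (norm_nonneg _) ?_ (by linarith)
      have := ((hTd (a * φ₀ x)).comp_hasFDerivAt x
        ((g1.differentiable (by simp) x).hasFDerivAt.const_mul a)).fderiv
      change ‖fderiv ℝ (T ∘ fun y => a * φ₀ y) x‖ ≤ _
      rw [this, norm_smul, norm_smul, Real.norm_of_nonneg (by linarith : 0 ≤ a),
        Real.norm_of_nonneg (by linarith [hG4 (a * φ₀ x)])]
      refine mul_le_of_le_one_left (by positivity) ?_
      linarith [hG4 (a * φ₀ x)]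
    have h2 : a ^ p * ∫ x, ‖fderiv ℝ φ₀ x‖ ^ p ≤ a ^ p * (γ₁ * c₁) :=
      mul_le_mul_of_nonneg_left g5.le (by positivity)
    have h3 : a ^ p * γ₁ * c₁ ≤ γ₂ * c₁ := mul_le_mul_of_nonneg_right ha hc₁0.le
    linarith
  have iu := integrable_energy hp hu1 hu2
  let w : EuclideanSpace ℝ (Fin N) → ℝ := fun x => F (u x)
  have hw1 : ContDiff ℝ (⊤ : ℕ∞) w := hF1.comp hu1
  have hw0 : ∀ x, 0 ≤ w x := fun x => hF0 _
  have hwW : ∀ x, w x ≤ W := fun x => hFW _ (hu5 x)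
  have hwd : ∀ x, HasFDerivAt w (deriv F (u x) • fderiv ℝ u x) x := fun x =>
    (hFd (u x)).hasDerivAt.comp_hasFDerivAt x (hud x)
  -- test function
  let ψ : EuclideanSpace ℝ (Fin N) → ℝ := fun x => η₁ x * w x
  have hψ1 : ContDiff ℝ (⊤ : ℕ∞) ψ := hη11.mul hw1
  have hψ2 : HasCompactSupport ψ := hη12.mul_right
  have hψ3 : tsupport ψ ⊆ Ω := by
    intro x hx
    have hx1 : x ∈ tsupport η₁ := tsupport_mul_subset_left hx
    have hx2 : u x ≤ b := by
      have hcl : IsClosed {x | u x ≤ b} := isClosed_le hu1.continuous continuous_const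
      have hsub : Function.support ψ ⊆ {x | u x ≤ b} := by
        intro y hy
        by_contra hlt
        refine hy ?_
        have : w y = 0 := hF2 _ (not_le.1 hlt).le
        simp [ψ, this]
      exact closure_minimal hsub hcl hx
    by_contra hxΩ
    have := hu4 x ⟨Metric.ball_subset_closedBall (hη13 hx1), hxΩ⟩
    linarith
  have iψ : Integrable (fun x => |ψ x| ^ p) := integrable_power hp hψ1.continuous hψ2
  set m := ∫ x, |ψ x| ^ p with hm
  -- upper bound for the energy
  have hψE : ∫ x, ‖fderiv ℝ ψ x‖ ^ p ≤ U := by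
    have iη := integrable_energy hp hη11 hη12
    have h1 : ∫ x, ‖fderiv ℝ ψ x‖ ^ p ≤ ∫ x, ((1 - 1 / 2 : ℝ) ^ (1 - p) * ‖fderiv ℝ u x‖ ^ p +
        (1 / 2 : ℝ) ^ (1 - p) * (W ^ p * ‖fderiv ℝ η₁ x‖ ^ p)) := by
      refine integral_mono (integrable_energy hp hψ1 hψ2)
        ((iu.const_mul _).add ((iη.const_mul _).const_mul _)) fun x => ?_
      simp only
      rw [← Real.mul_rpow hW0 (norm_nonneg _)]
      refine le_trans ?_ (rpow_add_le_weighted hp (by norm_num) (by norm_num) (norm_nonneg _)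
        (mul_nonneg hW0 (norm_nonneg _)))
      refine Real.rpow_le_rpow (norm_nonneg _) ?_ (by linarith)
      have := ((hη11.differentiable (by simp) x).hasFDerivAt.mul (hwd x)).fderiv
      change ‖fderiv ℝ (η₁ * w) x‖ ≤ _
      rw [this]
      refine (norm_add_le _ _).trans (add_le_add ?_ ?_)
      · rw [norm_smul, norm_smul, ← mul_assoc]
        refine mul_le_of_le_one_left (norm_nonneg _) ?_
        rw [Real.norm_of_nonneg (hη15 x).1]
        refine mul_le_one₀ (hη15 x).2 (norm_nonneg _) ?_
        rw [Real.norm_eq_abs, abs_le]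
        exact ⟨(hF4 _).1, by linarith [(hF4 (u x)).2]⟩
      · rw [norm_smul, Real.norm_of_nonneg (hw0 x)]
        exact mul_le_mul_of_nonneg_right (hwW x) (norm_nonneg _)
    rw [integral_add (iu.const_mul _) ((iη.const_mul _).const_mul _), integral_const_mul,
      integral_const_mul, integral_const_mul] at h1
    refine h1.trans ?_
    rw [hU]
    have : 0 ≤ (1 - 1 / 2 : ℝ) ^ (1 - p) := Real.rpow_nonneg (by norm_num) _
    gcongr
  -- lower bound for the mass
  have hmm : m₀ ≤ m := by
    let v : EuclideanSpace ℝ (Fin N) → ℝ := fun x => u x + η₂ x * w x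
    have hv1 : ContDiff ℝ (⊤ : ℕ∞) v := hu1.add (hη21.mul hw1)
    have hv3 : tsupport v ⊆ Metric.ball 0 2 := by
      refine (tsupport_add u (fun x => η₂ x * w x)).trans (Set.union_subset hu3 ?_)
      refine (tsupport_mul_subset_left (f := η₂) (g := w)).trans (hη23.trans ?_)
      exact Metric.ball_subset_ball (by linarith)
    have hv2 : HasCompactSupport v :=
      (isCompact_closedBall (0 : EuclideanSpace ℝ (Fin N)) 2).of_isClosed_subset
        (isClosed_tsupport _) (hv3.trans Metric.ball_subset_closedBall)
    have hcap := pCapacity_le (p := p) hv1 hv2 hv3 (fun x hx => by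
      simp only [v, hη24 x hx, one_mul]
      exact hF3 (u x) : ∀ x ∈ Metric.closedBall (0 : EuclideanSpace ℝ (Fin N)) θ, 1 ≤ v x)
    have h1 : ∫ x, ‖fderiv ℝ v x‖ ^ p ≤ ∫ x, ((1 - s) ^ (1 - p) * ‖fderiv ℝ u x‖ ^ p +
        s ^ (1 - p) * ((G₂ + 1) ^ p * |ψ x| ^ p)) := by
      refine integral_mono (integrable_energy hp hv1 hv2)
        ((iu.const_mul _).add ((iψ.const_mul _).const_mul _)) fun x => ?_
      simp only
      rw [← Real.mul_rpow (by linarith) (abs_nonneg _)]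
      refine le_trans ?_ (rpow_add_le_weighted hp hs0 hs1 (norm_nonneg _)
        (mul_nonneg (by linarith) (abs_nonneg _)))
      refine Real.rpow_le_rpow (norm_nonneg _) ?_ (by linarith)
      have := ((hud x).add
        ((hη21.differentiable (by simp) x).hasFDerivAt.mul (hwd x))).fderiv
      change ‖fderiv ℝ (u + η₂ * w) x‖ ≤ _
      rw [this, ← add_assoc]
      refine (norm_add_le _ _).trans (add_le_add ?_ ?_)
      · have e : fderiv ℝ u x + η₂ x • deriv F (u x) • fderiv ℝ u x =
            (1 + η₂ x * deriv F (u x)) • fderiv ℝ u x := by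
          rw [add_smul, one_smul, smul_smul]
        rw [e, norm_smul]
        refine mul_le_of_le_one_left (norm_nonneg _) ?_
        rw [Real.norm_eq_abs, abs_le]
        have a1 := hη25 x
        have a2 := hF4 (u x)
        have a3 : 0 ≤ η₂ x * (-deriv F (u x)) := mul_nonneg a1.1 (by linarith)
        have a4 : η₂ x * (-deriv F (u x)) ≤ 1 := mul_le_one₀ a1.2 (by linarith) (by linarith)
        rw [mul_neg] at a3 a4
        exact ⟨by linarith, by linarith⟩
      · rw [norm_smul, Real.norm_of_nonneg (hw0 x)]
        by_cases hx : x ∈ tsupport η₂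
        · have hx1 : η₁ x = 1 := hη14 x (Metric.ball_subset_closedBall (hη23 hx))
          have : |ψ x| = w x := by simp [ψ, hx1, abs_of_nonneg (hw0 x)]
          rw [this, mul_comm]
          exact mul_le_mul_of_nonneg_right (by linarith [hG₂ x]) (hw0 x)
        · rw [fderiv_of_notMem_tsupport ℝ hx, norm_zero, mul_zero]
          exact mul_nonneg (by linarith) (abs_nonneg _)
    rw [integral_add (iu.const_mul _) ((iψ.const_mul _).const_mul _), integral_const_mul,
      integral_const_mul, integral_const_mul, ← hm] at h1
    have h2 : (1 - s) ^ (1 - p) * ∫ x, ‖fderiv ℝ u x‖ ^ p ≤ (1 - s) ^ (1 - p) * (γ₂ * c₁) :=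
      mul_le_mul_of_nonneg_left huE (Real.rpow_nonneg (by linarith) _)
    have h3 : (1 - s) ^ (1 - p) * γ₂ * c₁ ≤ γ₃ * c₁ := mul_le_mul_of_nonneg_right hs hc₁0.le
    rw [hm₀, div_le_iff₀ hD0]
    have h4 : (κ - γ₃) * c₁ = κ * c₁ - γ₃ * c₁ := by ring
    have h5 : m * (s ^ (1 - p) * (G₂ + 1) ^ p) = s ^ (1 - p) * ((G₂ + 1) ^ p * m) := by ring
    rw [h4, h5]
    linarith
  refine ⟨ψ, hψ1, hψ2, hψ3, hm₀0.trans_le hmm, hψE.trans ?_⟩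
  rw [div_mul_eq_mul_div, le_div_iff₀ hm₀0]
  exact mul_le_mul_of_nonneg_left hmm hU0.le

theorem lambdaP_le_of_negligible {N : ℕ} {p γ : ℝ} (hN : 2 ≤ N) (hp : 1 ≤ p) (hγ0 : 0 < γ)
    (hγ1 : γ < 1) :
    ∃ M : ℝ, 0 < M ∧ ∀ Ω : Set (EuclideanSpace ℝ (Fin N)), ∀ x₀ r, 0 < r →
      IsNegligible p γ Ω x₀ r → lambdaP p Ω ≤ M * (1 / r) ^ p := by
  obtain ⟨M, hM0, hM⟩ := unit_estimate hN hp hγ0 hγ1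
  refine ⟨M, hM0, fun Ω x₀ r hr h => ?_⟩
  obtain ⟨ψ, h1, h2, h3, h4, h5⟩ := hM _ (isNegligible_scale hr h)
  have hr' : 0 < r⁻¹ := inv_pos.2 hr
  obtain ⟨g1, g2, g3⟩ := admissible_scale (-(r⁻¹ • x₀)) hr' h1 h2 h3
  have hinv : (fun y => -(r⁻¹ • x₀) + r⁻¹ • y) ⁻¹' ((fun y => x₀ + r • y) ⁻¹' Ω) = Ω := by
    ext x
    simp [hr.ne', smul_smul]
  rw [hinv] at g3
  have e1 := power_scale (p := p) (φ := ψ) (-(r⁻¹ • x₀)) hr'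
  have e2 := energy_scale (p := p) (φ := ψ) (-(r⁻¹ • x₀)) hr'
  have hk : 0 < ((r⁻¹) ^ N)⁻¹ := by positivity
  have hpos : 0 < ∫ y, |ψ (-(r⁻¹ • x₀) + r⁻¹ • y)| ^ p := by
    rw [e1]; exact mul_pos hk h4
  refine (lambdaP_le_div hp g1 g2 g3 hpos).trans ?_
  rw [div_le_iff₀ hpos, e1, e2, one_div]
  calc (r⁻¹) ^ p * ((r⁻¹) ^ N)⁻¹ * ∫ x, ‖fderiv ℝ ψ x‖ ^ p
      ≤ (r⁻¹) ^ p * ((r⁻¹) ^ N)⁻¹ * (M * ∫ x, |ψ x| ^ p) :=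
        mul_le_mul_of_nonneg_left h5 (by positivity)
    _ = _ := by ring

/-- Upper bound of the Main Theorem: for `1 ≤ p ≤ N` and `0 < γ < 1` there is a constant
`C = C(N,p,γ) > 0` such that for every open set `Ω` with finite capacitary inradius,
`λ_p(Ω) ≤ C R_{p,γ}(Ω)^{-p}`; if the capacitary inradius is infinite, then `λ_p(Ω) = 0`. -/
theorem main_upper_bound (N : ℕ) (p γ : ℝ) (hN : 2 ≤ N) (hp1 : 1 ≤ p) (hpN : p ≤ (N:ℝ))
    (hγ0 : 0 < γ) (hγ1 : γ < 1) :
    ∃ C : ℝ, 0 < C ∧ ∀ Ω : Set (EuclideanSpace ℝ (Fin N)), IsOpen Ω →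
      (capInradius p γ Ω ≠ ⊤ →
        lambdaP p Ω ≤ C * (1 / (capInradius p γ Ω).toReal) ^ p) ∧
      (capInradius p γ Ω = ⊤ → lambdaP p Ω = 0) := by
  obtain ⟨M, hM0, hM⟩ := lambdaP_le_of_negligible (N := N) hN hp1 hγ0 hγ1
  refine ⟨M * 2 ^ p, by positivity, fun Ω hΩ => ⟨fun hfin => ?_, fun htop => ?_⟩⟩
  · rcases Set.eq_empty_or_nonempty Ω with rfl | ⟨x, hx⟩
    · have h0 : lambdaP p (∅ : Set (EuclideanSpace ℝ (Fin N))) = 0 := by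
        unfold lambdaP
        convert Real.sInf_empty
        refine Set.eq_empty_iff_forall_notMem.2 ?_
        rintro c ⟨φ, -, -, h3, h4, -⟩
        have hφ : φ = 0 := tsupport_eq_empty_iff.1 (Set.subset_empty_iff.1 h3)
        rw [hφ] at h4
        simp [Real.zero_rpow (by linarith : p ≠ 0)] at h4
      rw [h0]
      positivity
    · -- the inradius is positive
      obtain ⟨ε, hε0, hε⟩ := Metric.nhds_basis_closedBall.mem_iff.1 (hΩ.mem_nhds hx)
      have hneg : IsNegligible p γ Ω x ε := by
        unfold IsNegligible
        have hcap0 : 0 ≤ pCapacity p (Metric.closedBall x ε) (Metric.ball x (2 * ε)) := by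
          refine Real.sInf_nonneg ?_
          rintro c ⟨ψ, -, -, -, -, rfl⟩
          exact energy_nonneg p ψ
        refine le_trans ?_ (mul_nonneg hγ0.le hcap0)
        have := pCapacity_le (p := p) (K := Metric.closedBall x ε \ Ω)
          (E := Metric.ball x (2 * ε)) (φ := fun _ => 0) contDiff_const HasCompactSupport.zero
          (by simp) (fun y hy => absurd (hε hy.1) hy.2)
        simpa [Real.zero_rpow (by linarith : p ≠ 0)] using this
      have hle : ENNReal.ofReal ε ≤ capInradius p γ Ω := le_sSup ⟨ε, hε0, rfl, x, hneg⟩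
      have hR0 : capInradius p γ Ω ≠ 0 := by
        intro h
        rw [h] at hle
        have := ENNReal.ofReal_pos.2 hε0
        exact absurd hle (not_le.2 this)
      have hlt : capInradius p γ Ω / 2 < capInradius p γ Ω := ENNReal.half_lt_self hR0 hfin
      obtain ⟨_, ⟨r, hr, rfl, x₀, hn⟩, hlt'⟩ := lt_sSup_iff.1 hlt
      have hRr : (capInradius p γ Ω).toReal / 2 ≤ r := by
        have := ENNReal.toReal_mono ENNReal.ofReal_ne_top hlt'.le
        rwa [ENNReal.toReal_div, ENNReal.toReal_ofReal hr.le, ENNReal.toReal_ofNat] at this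
      have hRpos : 0 < (capInradius p γ Ω).toReal := ENNReal.toReal_pos hR0 hfin
      refine (hM Ω x₀ r hr hn).trans ?_
      rw [mul_assoc, ← Real.mul_rpow (by norm_num) (by positivity)]
      gcongr
      rw [mul_one_div, div_le_div_iff₀ hr hRpos]
      linarith
  · refine le_antisymm ?_ (lambdaP_nonneg p Ω)
    refine le_of_forall_pos_le_add fun ε hε => ?_
    have hlt : ENNReal.ofReal (max 1 (M / ε)) < capInradius p γ Ω := by
      rw [htop]; exact ENNReal.ofReal_lt_top
    obtain ⟨_, ⟨r, hr, rfl, x₀, hn⟩, hlt'⟩ := lt_sSup_iff.1 hlt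
    have hmr : max 1 (M / ε) < r := (ENNReal.ofReal_lt_ofReal_iff hr).1 hlt'
    have h1r : 1 < r := (le_max_left _ _).trans_lt hmr
    have h2r : M / ε < r := (le_max_right _ _).trans_lt hmr
    refine (hM Ω x₀ r hr hn).trans ?_
    have h3 : (1 / r) ^ p ≤ 1 / r := by
      have := Real.rpow_le_rpow_of_exponent_ge (x := 1 / r) (by positivity)
        ((div_le_one hr).2 h1r.le) hp1
      simpa using this
    have h4 : M * (1 / r) ^ p ≤ M * (1 / r) := mul_le_mul_of_nonneg_left h3 hM0.le
    have h5 : M * (1 / r) ≤ ε := by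
      rw [mul_one_div, div_le_iff₀ hr]
      rw [div_lt_iff₀ hε] at h2r
      linarith
    linarith
end
end

section
/- Let p > N ≥ 2 and let γ₀ = 2^{N-p}·(2^{(p-N)/(p-1)} − 1)^{p-1}. Then for every open set Ω ⊆ ℝ^N and every 0 ≤ γ < γ₀, the capacitary inradius coincides with the classical inradius: R_{p,γ}(Ω) = r_Ω. -/
open MeasureTheory Filter
open scoped ENNReal

noncomputable section

/-- The classical inradius, as an extended nonnegative real. -/
noncomputable def eInradius {N : ℕ} (Ω : Set (EuclideanSpace ℝ (Fin N))) : ℝ≥0∞ :=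
  sSup {ρ : ℝ≥0∞ | ∃ r : ℝ, 0 < r ∧ ρ = ENNReal.ofReal r ∧
    ∃ x₀ : EuclideanSpace ℝ (Fin N), Metric.ball x₀ r ⊆ Ω}


open Set Metric Measure Module in
theorem lintegral_polar {E : Type*} [NormedAddCommGroup E] [NormedSpace ℝ E]
    [FiniteDimensional ℝ E] [MeasurableSpace E] [BorelSpace E] [Nontrivial E]
    (μ : Measure E) [μ.IsAddHaarMeasure] (f : E → ℝ≥0∞) (hf : Measurable f) :
    ∫⁻ x, f x ∂μ = ∫⁻ θ, (∫⁻ s in Ioi (0:ℝ), ENNReal.ofReal (s ^ (finrank ℝ E - 1)) *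
      f (s • (θ : E))) ∂μ.toSphere := by
  calc ∫⁻ x, f x ∂μ = ∫⁻ x : ({(0)}ᶜ : Set E), f x.1 ∂(μ.comap (↑)) := by
        rw [lintegral_subtype_comap (measurableSet_singleton _).compl f,
          restrict_compl_singleton]
    _ = ∫⁻ x, f (x.2.1 • x.1.1) ∂μ.toSphere.prod (.volumeIoiPow (finrank ℝ E - 1)) := by
        rw [← μ.measurePreserving_homeomorphUnitSphereProd.lintegral_comp_emb
          (Homeomorph.measurableEmbedding _)]
        refine lintegral_congr fun x => ?_
        have := (homeomorphUnitSphereProd E).symm_apply_apply x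
        conv_lhs => rw [← this]
        simp only [homeomorphUnitSphereProd_symm_apply_coe]
    _ = ∫⁻ θ, (∫⁻ s, f (s.1 • θ.1) ∂(.volumeIoiPow (finrank ℝ E - 1))) ∂μ.toSphere := by
        rw [lintegral_prod]
        fun_prop
    _ = _ := by
        refine lintegral_congr fun θ => ?_
        rw [volumeIoiPow, lintegral_withDensity_eq_lintegral_mul _ (by fun_prop) (by fun_prop),
          ← lintegral_subtype_comap measurableSet_Ioi]
        rfl

open Set in
theorem ray_bound {E : Type*} [NormedAddCommGroup E] [NormedSpace ℝ E]
    (φ : E → ℝ) (hφ : ContDiff ℝ (⊤ : ℕ∞) φ) (hc : HasCompactSupport φ) (x θ : E)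
    (hθ : ‖θ‖ = 1) : ‖φ x‖ₑ ≤ ∫⁻ s in Ioi (0:ℝ), ‖fderiv ℝ φ (x + s • θ)‖ₑ := by
  obtain ⟨C, hC⟩ := hc.isCompact.isBounded.exists_norm_le
  obtain ⟨T, hT0, hT⟩ : ∃ T : ℝ, 0 < T ∧ C + ‖x‖ < T :=
    ⟨max 1 (C + ‖x‖ + 1), by positivity, lt_of_lt_of_le (by linarith) (le_max_right _ _)⟩
  have h0 : φ (x + T • θ) = 0 := by
    apply image_eq_zero_of_notMem_tsupport
    intro h
    have h1 := hC _ h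
    have h2 : ‖T • θ‖ ≤ ‖x + T • θ‖ + ‖x‖ := by
      simpa using norm_sub_le (x + T • θ) x
    rw [norm_smul, hθ, Real.norm_of_nonneg hT0.le] at h2
    linarith
  have hd : ∀ s ∈ uIcc 0 T, HasDerivAt (fun s : ℝ => φ (x + s • θ))
      (fderiv ℝ φ (x + s • θ) θ) s := by
    intro s _
    have h1 : HasDerivAt (fun s : ℝ => x + s • θ) θ s := by
      simpa using ((hasDerivAt_id s).smul_const θ).const_add x
    exact ((hφ.differentiable (by simp)).differentiableAt.hasFDerivAt).comp_hasDerivAt s h1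
  have hcont : Continuous (fun s : ℝ => fderiv ℝ φ (x + s • θ) θ) := by
    have := hφ.continuous_fderiv (by simp)
    fun_prop
  have h3 := intervalIntegral.integral_eq_sub_of_hasDerivAt hd (hcont.intervalIntegrable _ _)
  simp only [h0, zero_smul, add_zero, zero_sub] at h3
  calc ‖φ x‖ₑ = ‖∫ s in (0:ℝ)..T, fderiv ℝ φ (x + s • θ) θ‖ₑ := by rw [h3, enorm_neg]
    _ ≤ ∫⁻ s in Ioc 0 T, ‖fderiv ℝ φ (x + s • θ) θ‖ₑ := by
      rw [intervalIntegral.integral_of_le hT0.le]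
      exact enorm_integral_le_lintegral_enorm _
    _ ≤ ∫⁻ s in Ioc 0 T, ‖fderiv ℝ φ (x + s • θ)‖ₑ := by
      refine lintegral_mono fun s => ?_
      have := (fderiv ℝ φ (x + s • θ)).le_opENorm θ
      have h4 : ‖θ‖ₑ = 1 := by rw [← ofReal_norm, hθ]; simp
      simpa [h4] using this
    _ ≤ _ := lintegral_mono_set Ioc_subset_Ioi_self

open Set Metric Measure Module in
theorem pot_bound {E : Type*} [NormedAddCommGroup E] [NormedSpace ℝ E]
    [FiniteDimensional ℝ E] [MeasurableSpace E] [BorelSpace E] [Nontrivial E]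
    (μ : Measure E) [μ.IsAddHaarMeasure]
    (φ : E → ℝ) (hφ : ContDiff ℝ (⊤ : ℕ∞) φ) (hc : HasCompactSupport φ) (x : E) :
    ‖φ x‖ₑ * (finrank ℝ E * μ (ball 0 1)) ≤
      ∫⁻ y, ‖fderiv ℝ φ y‖ₑ * ‖y - x‖ₑ ^ (-((finrank ℝ E : ℝ) - 1)) ∂μ := by
  have hm := hφ.continuous_fderiv (by simp)
  rw [← lintegral_add_left_eq_self _ x, lintegral_polar]
  · rw [← toSphere_apply_univ, ← lintegral_const]
    refine lintegral_mono fun θ => (ray_bound φ hφ hc x θ (by simp)).trans_eq ?_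
    refine setLIntegral_congr_fun measurableSet_Ioi fun s (hs : 0 < s) => ?_
    have h4 : ‖s • (θ : E)‖ₑ = ENNReal.ofReal s := by
      rw [← ofReal_norm, norm_smul]; simp [abs_of_pos hs]
    simp only [add_sub_cancel_left, h4]
    rw [mul_left_comm, ENNReal.ofReal_rpow_of_pos hs, ← ENNReal.ofReal_mul (by positivity),
      ← Real.rpow_natCast, ← Real.rpow_add hs, Nat.cast_sub (Module.finrank_pos (R := ℝ) (M := E))]
    simp
  · fun_prop

open Set Metric in
theorem bathtub {E : Type*} [NormedAddCommGroup E] [NormedSpace ℝ E]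
    [FiniteDimensional ℝ E] [MeasurableSpace E] [BorelSpace E]
    (μ : Measure E) [μ.IsAddHaarMeasure] (k : ℝ≥0∞ → ℝ≥0∞) (hk : Antitone k)
    (x y : E) (R : ℝ) :
    ∫⁻ z in ball y R, k ‖z - x‖ₑ ∂μ ≤ ∫⁻ z in ball x R, k ‖z - x‖ₑ ∂μ := by
  have hA : MeasurableSet (ball y R) := measurableSet_ball
  have hB : MeasurableSet (ball x R) := measurableSet_ball
  have hμ : μ (ball y R \ ball x R) = μ (ball x R \ ball y R) := by
    have h1 := measure_inter_add_sdiff (μ := μ) (ball y R) hB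
    have h2 := measure_inter_add_sdiff (μ := μ) (ball x R) hA
    rw [Measure.addHaar_ball_center] at h1 h2
    rw [← h2, inter_comm] at h1
    exact (ENNReal.add_right_inj
      (measure_ne_top_of_subset inter_subset_left measure_ball_lt_top.ne)).1 h1
  rw [← lintegral_inter_add_sdiff _ (ball y R) hB, ← lintegral_inter_add_sdiff _ (ball x R) hA,
    inter_comm]
  refine add_le_add le_rfl ?_
  calc ∫⁻ z in ball y R \ ball x R, k ‖z - x‖ₑ ∂μ
      ≤ ∫⁻ z in ball y R \ ball x R, k (ENNReal.ofReal R) ∂μ := by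
        refine setLIntegral_mono measurable_const fun z hz => hk ?_
        rw [← ofReal_norm]
        apply ENNReal.ofReal_le_ofReal
        simpa [dist_eq_norm] using hz.2
    _ = ∫⁻ z in ball x R \ ball y R, k (ENNReal.ofReal R) ∂μ := by simp [hμ]
    _ ≤ _ := by
        refine setLIntegral_mono' (hB.diff hA) fun z hz => hk ?_
        rw [← ofReal_norm]
        apply ENNReal.ofReal_le_ofReal
        have := hz.1
        rw [mem_ball, dist_eq_norm] at this
        exact this.le

open Set Metric Measure Module in
theorem lintegral_ball_pow {E : Type*} [NormedAddCommGroup E] [NormedSpace ℝ E]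
    [FiniteDimensional ℝ E] [MeasurableSpace E] [BorelSpace E] [Nontrivial E]
    (μ : Measure E) [μ.IsAddHaarMeasure] (x : E) (R b : ℝ) (hR : 0 < R)
    (hb : b < finrank ℝ E) :
    ∫⁻ z in ball x R, ‖z - x‖ₑ ^ (-b) ∂μ ≤
      (finrank ℝ E * μ (ball 0 1)) * ENNReal.ofReal (R ^ (finrank ℝ E - b) / (finrank ℝ E - b)) := by
  rw [← lintegral_indicator measurableSet_ball, ← lintegral_add_left_eq_self _ x, lintegral_polar]
  · rw [← toSphere_apply_univ, mul_comm, ← lintegral_const]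
    refine lintegral_mono fun θ => ?_
    calc ∫⁻ s in Ioi (0:ℝ), ENNReal.ofReal (s ^ (finrank ℝ E - 1)) *
          (ball x R).indicator (fun z => ‖z - x‖ₑ ^ (-b)) (x + s • (θ : E))
        ≤ ∫⁻ s in Ioi (0:ℝ), (Ioc 0 R).indicator
          (fun s => ENNReal.ofReal (s ^ (finrank ℝ E - 1 - b))) s := by
          refine setLIntegral_mono' measurableSet_Ioi fun s (hs : 0 < s) => ?_
          have h4 : ‖s • (θ : E)‖ₑ = ENNReal.ofReal s := by
            rw [← ofReal_norm, norm_smul]; simp [abs_of_pos hs]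
          have h5 : ‖s • (θ : E)‖ = s := by
            rw [norm_smul]; simp [abs_of_pos hs]
          by_cases hsR : s < R
          · rw [indicator_of_mem (by simpa [h5] using hsR), indicator_of_mem (show s ∈ Ioc 0 R from ⟨hs, hsR.le⟩)]
            simp only [add_sub_cancel_left, h4]
            rw [ENNReal.ofReal_rpow_of_pos hs, ← ENNReal.ofReal_mul (by positivity),
              ← Real.rpow_natCast, ← Real.rpow_add hs,
              Nat.cast_sub (Module.finrank_pos (R := ℝ) (M := E))]
            simp [sub_eq_add_neg]
          · rw [indicator_of_notMem (by simpa [h5] using hsR)]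
            simp
      _ ≤ ∫⁻ s in Ioc 0 R, ENNReal.ofReal (s ^ (finrank ℝ E - 1 - b)) := by
          rw [← lintegral_indicator measurableSet_Ioc]
          exact setLIntegral_le_lintegral _ _
      _ = ENNReal.ofReal (∫ s in Ioc 0 R, (s ^ (finrank ℝ E - 1 - b))) := by
          rw [ofReal_integral_eq_lintegral_ofReal]
          · exact (intervalIntegral.intervalIntegrable_rpow' (by linarith)).1
          · filter_upwards [ae_restrict_mem measurableSet_Ioc] with s hs
            exact Real.rpow_nonneg hs.1.le _
      _ = _ := by
          rw [← intervalIntegral.integral_of_le hR.le, integral_rpow (Or.inl (by linarith))]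
          rw [show (finrank ℝ E - 1 - b + 1 : ℝ) = finrank ℝ E - b by ring,
            Real.zero_rpow (by linarith)]
          simp
      _ ≤ _ := le_rfl
  · have : Measurable ((ball x R).indicator (fun z => ‖z - x‖ₑ ^ (-b))) :=
      Measurable.indicator (by fun_prop) measurableSet_ball
    fun_prop

open Set Metric Measure Module in
theorem energy_lower {E : Type*} [NormedAddCommGroup E] [NormedSpace ℝ E]
    [FiniteDimensional ℝ E] [MeasurableSpace E] [BorelSpace E] [Nontrivial E]
    (μ : Measure E) [μ.IsAddHaarMeasure] (p : ℝ) (hd : 1 ≤ finrank ℝ E)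
    (hp : (finrank ℝ E : ℝ) < p)
    (φ : E → ℝ) (hφ : ContDiff ℝ (⊤ : ℕ∞) φ) (hc : HasCompactSupport φ) (x y : E) (R : ℝ)
    (hR : 0 < R) (hs : tsupport φ ⊆ ball y R) (hx : 1 ≤ φ x) :
    (finrank ℝ E * μ.real (ball 0 1)) *
      (R ^ ((p - finrank ℝ E) / (p - 1)) / ((p - finrank ℝ E) / (p - 1))) ^ (1 - p) ≤
      ∫ z, ‖fderiv ℝ φ z‖ ^ p ∂μ := by
  have hd' : (1:ℝ) ≤ finrank ℝ E := by exact_mod_cast hd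
  have hp1 : 0 < p - 1 := by linarith
  have hp0 : 0 < p := by linarith
  set d : ℝ := ((finrank ℝ E : ℕ) : ℝ) with hdd
  set κ := (p - d) / (p - 1) with hκ
  have hκ0 : 0 < κ := div_pos (by linarith) hp1
  set q := p / (p - 1) with hq
  have hq0 : 0 < q := div_pos hp0 hp1
  have hpq : p.HolderConjugate q := Real.HolderConjugate.conjExponent (by linarith)
  have hDc := hφ.continuous_fderiv (by simp)
  set I := ∫ z, ‖fderiv ℝ φ z‖ ^ p ∂μ with hI
  have hI0 : 0 ≤ I := integral_nonneg fun z => by positivity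
  have hIof : ENNReal.ofReal I = ∫⁻ z, ‖fderiv ℝ φ z‖ₑ ^ p ∂μ := by
    rw [hI, ofReal_integral_eq_lintegral_ofReal]
    · refine lintegral_congr fun z => ?_
      rw [← ofReal_norm, ENNReal.ofReal_rpow_of_nonneg (norm_nonneg _) hp0.le]
    · apply Continuous.integrable_of_hasCompactSupport
      · exact hDc.norm.rpow_const fun _ => Or.inr hp0.le
      · refine (hc.fderiv (𝕜 := ℝ)).comp_left (g := fun L => ‖L‖ ^ p) ?_
        simp [Real.zero_rpow hp0.ne']
    · exact ae_of_all _ fun z => by positivity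
  set M := R ^ κ / κ with hM
  have hM0 : 0 < M := by positivity
  set W := d * μ.real (ball 0 1) with hW
  have hω : 0 < μ.real (ball (0:E) 1) :=
    ENNReal.toReal_pos (measure_ball_pos μ _ one_pos).ne' measure_ball_lt_top.ne
  have hW0 : 0 < W := by positivity
  have hWof : ENNReal.ofReal W = finrank ℝ E * μ (ball 0 1) := by
    rw [hW, ENNReal.ofReal_mul (by positivity), hdd, ENNReal.ofReal_natCast,
      measureReal_def, ENNReal.ofReal_toReal measure_ball_lt_top.ne]
  have key : ENNReal.ofReal W ≤ ENNReal.ofReal I ^ (1 / p) *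
      (ENNReal.ofReal W * ENNReal.ofReal M) ^ (1 / q) := by
    calc ENNReal.ofReal W ≤ ‖φ x‖ₑ * (finrank ℝ E * μ (ball 0 1)) := by
          rw [hWof]
          refine le_mul_of_one_le_left' ?_
          rw [← ofReal_norm, ← ENNReal.ofReal_one]
          exact ENNReal.ofReal_le_ofReal (hx.trans (le_abs_self _))
      _ ≤ ∫⁻ z, ‖fderiv ℝ φ z‖ₑ * ‖z - x‖ₑ ^ (-(d - 1)) ∂μ := pot_bound μ φ hφ hc x
      _ = ∫⁻ z in ball y R, ‖fderiv ℝ φ z‖ₑ * ‖z - x‖ₑ ^ (-(d - 1)) ∂μ := by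
          rw [← lintegral_indicator measurableSet_ball]
          refine lintegral_congr fun z => ?_
          by_cases hz : z ∈ ball y R
          · rw [indicator_of_mem hz]
          · have : fderiv ℝ φ z = 0 := by
              apply image_eq_zero_of_notMem_tsupport
              exact fun h => hz (hs (tsupport_fderiv_subset ℝ h))
            have h0 : ‖fderiv ℝ φ z‖ₑ = 0 := by rw [← ofReal_norm, this]; simp
            rw [indicator_of_notMem hz, h0, zero_mul]
      _ ≤ (∫⁻ z in ball y R, ‖fderiv ℝ φ z‖ₑ ^ p ∂μ) ^ (1 / p) *
          (∫⁻ z in ball y R, (‖z - x‖ₑ ^ (-(d - 1))) ^ q ∂μ) ^ (1 / q) :=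
          ENNReal.lintegral_mul_le_Lp_mul_Lq _ hpq hDc.enorm.measurable.aemeasurable (by fun_prop)
      _ ≤ _ := by
          gcongr
          · rw [hIof]; exact setLIntegral_le_lintegral _ _
          · have hb : (d - 1) * q < d := by
              rw [hq, mul_div_assoc', div_lt_iff₀ hp1]; nlinarith
            have hk : Antitone (fun t : ℝ≥0∞ => t ^ (-((d - 1) * q))) := fun s t hst =>
by
              have : 0 ≤ (d - 1) * q := mul_nonneg (by linarith) hq0.le
              simp only [ENNReal.rpow_neg]
              exact ENNReal.inv_le_inv.2 (ENNReal.rpow_le_rpow hst this)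
            have h1 := bathtub μ _ hk x y R
            have h2 := lintegral_ball_pow μ x R _ hR hb
            have h3 : d - (d - 1) * q = κ := by
              rw [hq, hκ]; field_simp; ring
            rw [← hdd, h3, ← hWof] at h2
            simp only [← ENNReal.rpow_mul, neg_mul]
            exact h1.trans h2
  clear_value W M
  have key2 : W ≤ I ^ (1 / p) * (W * M) ^ (1 / q) := by
    rw [← ENNReal.ofReal_mul hW0.le, ENNReal.ofReal_rpow_of_nonneg hI0 (by positivity),
      ENNReal.ofReal_rpow_of_nonneg (by positivity) (by positivity),
      ← ENNReal.ofReal_mul (by positivity)] at key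
    exact (ENNReal.ofReal_le_ofReal_iff (by positivity)).1 key
  have key3 : W ^ p ≤ I * (W * M) ^ (p - 1) := by
    have := Real.rpow_le_rpow hW0.le key2 hp0.le
    rwa [Real.mul_rpow (by positivity) (by positivity), ← Real.rpow_mul hI0,
      ← Real.rpow_mul (by positivity), one_div_mul_cancel hp0.ne', Real.rpow_one,
      show 1 / q * p = p - 1 by rw [hq]; field_simp] at this
  rw [Real.mul_rpow hW0.le hM0.le] at key3
  have h6 : W ^ p = W * W ^ (p - 1) := by
    rw [← Real.rpow_one_add' hW0.le (by linarith)]; congr 1; ring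
  rw [show 1 - p = -(p - 1) by ring, Real.rpow_neg hM0.le]
  have h7 : 0 < W ^ (p - 1) := by positivity
  have h8 : 0 < M ^ (p - 1) := by positivity
  rw [← div_eq_mul_inv, div_le_iff₀ h8]
  rw [h6] at key3
  nlinarith

open Set Metric in
theorem exists_profile (α r a b R : ℝ) (hr : 0 < r) (hra : r < a) (hab : a < b) (hbR : b < R) :
    ∃ (g : ℝ → ℝ) (r' R' : ℝ), r < r' ∧ r' < R' ∧ R' < R ∧ ContDiff ℝ (⊤ : ℕ∞) g ∧ (∀ t, 0 ≤ g t) ∧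
      (∀ t ≤ r', g t = 0) ∧ (∀ t, R' ≤ t → g t = 0) ∧ (∀ t ∈ Icc a b, t ^ (-α) ≤ g t) ∧
      (∀ t, 0 < t → g t ≤ t ^ (-α)) := by
  obtain ⟨δ, hδ, h1, h2⟩ : ∃ δ : ℝ, 0 < δ ∧ r < a - δ ∧ b + δ < R := by
    refine ⟨min (a - r) (R - b) / 2, ?_, ?_, ?_⟩
    · have : 0 < min (a - r) (R - b) := lt_min (by linarith) (by linarith)
      linarith
    · have := min_le_left (a - r) (R - b); linarith
    · have := min_le_right (a - r) (R - b); linarith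
  let χ : ContDiffBump ((a + b) / 2 : ℝ) := ⟨(b - a) / 2, (b - a) / 2 + δ, by linarith, by linarith⟩
  have hz1 : ∀ t ≤ a - δ, χ t = 0 := fun t ht => by
    apply χ.zero_of_le_dist
    change (b - a) / 2 + δ ≤ _
    rw [Real.dist_eq, abs_of_nonpos (by linarith)]; linarith
  have hz2 : ∀ t, b + δ ≤ t → χ t = 0 := fun t ht => by
    apply χ.zero_of_le_dist
    change (b - a) / 2 + δ ≤ _
    rw [Real.dist_eq, abs_of_nonneg (by linarith)]; linarith
  have h1' : ∀ t ∈ Icc a b, χ t = 1 := fun t ht => by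
    apply χ.one_of_mem_closedBall
    change dist _ _ ≤ (b - a) / 2
    rw [Real.dist_eq, abs_le]
    constructor <;> linarith [ht.1, ht.2]
  refine ⟨fun t => χ t * t ^ (-α), a - δ, b + δ, h1, by linarith, h2, ?_, ?_, ?_, ?_, ?_, ?_⟩
  · rw [contDiff_iff_contDiffAt]
    intro t
    rcases lt_or_ge 0 t with ht | ht
    · exact χ.contDiffAt.mul (contDiffAt_id.rpow_const_of_ne ht.ne')
    · refine contDiffAt_const (c := (0:ℝ)) |>.congr_of_eventuallyEq ?_
      filter_upwards [Iio_mem_nhds (show t < a - δ by linarith)] with s hs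
      rw [hz1 s (le_of_lt hs), zero_mul]
  · intro t
    rcases le_or_gt t 0 with ht | ht
    · simp [hz1 t (by linarith)]
    · exact mul_nonneg χ.nonneg (Real.rpow_nonneg ht.le _)
  · intro t ht; simp [hz1 t ht]
  · intro t ht; simp [hz2 t ht]
  · intro t ht; simp [h1' t ht]
  · intro t ht
    exact mul_le_of_le_one_left (Real.rpow_nonneg ht.le _) χ.le_one

open Set Metric Measure Module in
theorem exists_test {E : Type*} [NormedAddCommGroup E] [InnerProductSpace ℝ E]
    [FiniteDimensional ℝ E] [MeasurableSpace E] [BorelSpace E] [Nontrivial E]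
    (μ : Measure E) [μ.IsAddHaarMeasure] (p : ℝ) (hd : 1 ≤ finrank ℝ E)
    (hp : (finrank ℝ E : ℝ) < p) (x₀ : E) (r a b R : ℝ)
    (hr : 0 < r) (hra : r < a) (hab : a < b) (hbR : b < R) :
    ∃ φ : E → ℝ, ContDiff ℝ (⊤ : ℕ∞) φ ∧ HasCompactSupport φ ∧
      tsupport φ ⊆ ball x₀ R ∧ (∀ x ∈ closedBall x₀ r, 1 ≤ φ x) ∧
      ∫ z, ‖fderiv ℝ φ z‖ ^ p ∂μ ≤ (finrank ℝ E * μ.real (ball 0 1)) *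
      ((b ^ ((p - finrank ℝ E) / (p - 1)) - a ^ ((p - finrank ℝ E) / (p - 1))) /
        ((p - finrank ℝ E) / (p - 1))) ^ (1 - p) := by
  have hd' : (1:ℝ) ≤ finrank ℝ E := by exact_mod_cast hd
  have hp1 : 0 < p - 1 := by linarith
  have hp0 : 0 < p := by linarith
  set κ := (p - finrank ℝ E) / (p - 1) with hκ
  have hκ0 : 0 < κ := div_pos (by linarith) hp1
  set α : ℝ := (finrank ℝ E - 1) / (p - 1) with hα
  have hακ : -α + 1 = κ := by rw [hα, hκ]; field_simp; ring
  obtain ⟨g, r', R', hr', hrR', hR', hg, hg0, hgr, hgR, hgl, hgu⟩ :=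
    exists_profile α r a b R hr hra hab hbR
  have hgc : Continuous g := hg.continuous
  have hgi : ∀ u v, IntervalIntegrable g volume u v := fun u v => hgc.intervalIntegrable u v
  set m := ∫ t in r..R, g t with hm
  have hrpc : IntervalIntegrable (fun t : ℝ => t ^ (-α)) volume a b := by
    apply ContinuousOn.intervalIntegrable
    intro t ht
    rw [uIcc_of_le hab.le] at ht
    exact (Real.continuousAt_rpow_const t (-α)
      (Or.inl (by linarith [ht.1] : (0:ℝ) < t).ne')).continuousWithinAt
  have hmlow : (b ^ κ - a ^ κ) / κ ≤ m := by
    calc (b ^ κ - a ^ κ) / κ = ∫ t in a..b, t ^ (-α) := by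
          rw [integral_rpow (Or.inl (by linarith)), hακ]
      _ ≤ ∫ t in a..b, g t := intervalIntegral.integral_mono_on hab.le hrpc (hgi _ _) hgl
      _ ≤ m := intervalIntegral.integral_mono_interval hra.le hab.le hbR.le
          (ae_of_all _ hg0) (hgi _ _)
  have hlow0 : 0 < (b ^ κ - a ^ κ) / κ := by
    have : a ^ κ < b ^ κ := Real.rpow_lt_rpow (by linarith) hab hκ0
    exact div_pos (by linarith) hκ0
  have hm0 : 0 < m := lt_of_lt_of_le hlow0 hmlow
  let h : ℝ → ℝ := fun s => 1 - (∫ t in r..s, g t) / m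
  have hh : ∀ s, HasDerivAt h (-(g s / m)) s := fun s => by
    have h1 : HasDerivAt (fun u => ∫ t in r..u, g t) (g s) s :=
      intervalIntegral.integral_hasDerivAt_right (hgi _ _)
        (hgc.stronglyMeasurableAtFilter _ _) hgc.continuousAt
    exact (h1.div_const m).const_sub 1
  have hhs : ContDiff ℝ (⊤ : ℕ∞) h := by
    refine contDiff_infty_iff_deriv.2 ⟨fun s => (hh s).differentiableAt, ?_⟩
    rw [show deriv h = fun s => -(g s / m) from funext fun s => (hh s).deriv]
    exact (hg.div_const m).neg
  have hh1 : ∀ s ≤ r', h s = 1 := fun s hs => by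
    have : ∫ t in r..s, g t = 0 := by
      rw [intervalIntegral.integral_congr (g := fun _ => (0:ℝ))]
      · simp
      · intro t ht
        exact hgr t (ht.2.trans (max_le hr'.le hs))
    simp [h, this]
  have hh0 : ∀ s, R' ≤ s → h s = 0 := fun s hs => by
    have h1 : ∫ t in R..s, g t = 0 := by
      rw [intervalIntegral.integral_congr (g := fun _ => (0:ℝ))]
      · simp
      · intro t ht
        exact hgR t ((le_min hR'.le hs).trans ht.1)
    have : ∫ t in r..s, g t = m := by
      rw [← intervalIntegral.integral_add_adjacent_intervals (hgi r R) (hgi R s), h1, add_zero]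
    simp [h, this, hm0.ne']
  let φ : E → ℝ := fun x => h ‖x - x₀‖
  have hloc : ∀ᶠ x in nhds x₀, φ x = 1 := by
    filter_upwards [ball_mem_nhds x₀ (hr.trans hr')] with x hx
    exact hh1 _ (by rw [← dist_eq_norm]; exact (mem_ball.1 hx).le)
  have hφ : ContDiff ℝ (⊤ : ℕ∞) φ := by
    rw [contDiff_iff_contDiffAt]
    intro x
    by_cases hx : x = x₀
    · subst hx
      exact contDiffAt_const.congr_of_eventuallyEq hloc
    · exact hhs.contDiffAt.comp x
        ((contDiffAt_id.sub contDiffAt_const).norm ℝ (sub_ne_zero.2 hx))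
  have hsupp : tsupport φ ⊆ closedBall x₀ R' := by
    refine closure_minimal ?_ isClosed_closedBall
    intro x hx
    by_contra hx'
    rw [mem_closedBall, not_le, dist_eq_norm] at hx'
    exact hx (hh0 _ hx'.le)
  have hD : ∀ x, ‖fderiv ℝ φ x‖ ≤ g ‖x - x₀‖ / m := fun x => by
    by_cases hx : x = x₀
    · subst hx
      have : fderiv ℝ φ x = 0 := by
        rw [Filter.EventuallyEq.fderiv_eq (f := fun _ => (1:ℝ)) hloc]; simp
      rw [this, norm_zero]
      exact div_nonneg (hg0 _) hm0.le
    · have hn : HasFDerivAt (fun x : E => ‖x - x₀‖) (fderiv ℝ (fun x : E => ‖x - x₀‖) x) x :=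
        (((contDiffAt_id.sub contDiffAt_const).norm ℝ (sub_ne_zero.2 hx) :
          ContDiffAt ℝ 1 (fun x : E => ‖x - x₀‖) x).differentiableAt (by simp)).hasFDerivAt
      have h2 : HasFDerivAt φ (-(g ‖x - x₀‖ / m) • fderiv ℝ (fun x : E => ‖x - x₀‖) x) x :=
        HasDerivAt.comp_hasFDerivAt (h₂ := h) (f := fun x : E => ‖x - x₀‖) x (hh ‖x - x₀‖) hn
      have hl : LipschitzWith 1 (fun x : E => ‖x - x₀‖) :=
        LipschitzWith.of_dist_le_mul fun u v => by
          have := abs_norm_sub_norm_le (u - x₀) (v - x₀)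
          simpa [Real.dist_eq, dist_eq_norm] using this
      have h3 := norm_fderiv_le_of_lipschitz ℝ hl (x₀ := x)
      rw [h2.fderiv, norm_smul, norm_neg, Real.norm_of_nonneg (div_nonneg (hg0 _) hm0.le)]
      exact mul_le_of_le_one_right (div_nonneg (hg0 _) hm0.le) (by simpa using h3)
  refine ⟨φ, hφ, (isCompact_closedBall x₀ R').of_isClosed_subset (isClosed_tsupport _) hsupp,
    hsupp.trans (closedBall_subset_ball hR'), ?_, ?_⟩
  · intro x hx
    exact (hh1 _ (by rw [← dist_eq_norm]; exact (mem_closedBall.1 hx).trans hr'.le)).ge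
  have hcs : HasCompactSupport (fun x => (g ‖x - x₀‖ / m) ^ p) := by
    refine HasCompactSupport.intro (isCompact_closedBall x₀ R') fun x hx => ?_
    rw [mem_closedBall, not_le, dist_eq_norm] at hx
    rw [hgR _ hx.le, zero_div, Real.zero_rpow hp0.ne']
  have hcp : Continuous (fun y => (g y / m) ^ p) :=
    (hgc.div_const m).rpow_const fun _ => Or.inr hp0.le
  have hgi0 : IntegrableOn g (Ioi 0) := by
    refine (hgc.integrable_of_hasCompactSupport ?_).integrableOn
    refine HasCompactSupport.intro (isCompact_Icc (a := r') (b := R')) fun x hx => ?_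
    by_contra hne
    refine hx ⟨?_, ?_⟩
    · by_contra hlt; exact hne (hgr x (not_le.1 hlt).le)
    · by_contra hlt; exact hne (hgR x (not_le.1 hlt).le)
  have hgm : ∫ y in Ioi 0, g y = m := by
    rw [hm, intervalIntegral.integral_of_le (by linarith)]
    refine setIntegral_eq_of_subset_of_forall_sdiff_eq_zero measurableSet_Ioi ?_ ?_
    · exact fun t ht => hr.trans ht.1
    · intro t ht
      by_contra hne
      refine ht.2 ⟨?_, ?_⟩
      · by_contra hlt; exact hne (hgr t ((not_lt.1 hlt).trans hr'.le))
      · by_contra hlt; exact hne (hgR t (hR'.le.trans (not_le.1 hlt).le))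
  calc ∫ z, ‖fderiv ℝ φ z‖ ^ p ∂μ ≤ ∫ z, (g ‖z - x₀‖ / m) ^ p ∂μ := by
        refine integral_mono_of_nonneg (ae_of_all _ fun z => by positivity) ?_
          (ae_of_all _ fun z => Real.rpow_le_rpow (norm_nonneg _) (hD z) hp0.le)
        exact Continuous.integrable_of_hasCompactSupport
          (hcp.comp (by fun_prop : Continuous fun z : E => ‖z - x₀‖)) hcs
    _ = ∫ z, (g ‖z‖ / m) ^ p ∂μ := integral_sub_right_eq_self (fun z => (g ‖z‖ / m) ^ p) x₀
    _ = (finrank ℝ E * μ.real (ball 0 1)) *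
        ∫ y in Ioi (0:ℝ), y ^ (finrank ℝ E - 1) * (g y / m) ^ p := by
        rw [integral_fun_norm_addHaar μ (fun y => (g y / m) ^ p)]
        simp [mul_assoc]
    _ ≤ (finrank ℝ E * μ.real (ball 0 1)) * ∫ y in Ioi (0:ℝ), m ^ (-p) * g y := by
        refine mul_le_mul_of_nonneg_left ?_ (by positivity)
        refine integral_mono_of_nonneg ?_ (hgi0.const_mul _) ?_
        · filter_upwards [ae_restrict_mem measurableSet_Ioi] with y hy
          exact mul_nonneg (pow_nonneg (le_of_lt hy) _)
            (Real.rpow_nonneg (div_nonneg (hg0 _) hm0.le) _)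
        · filter_upwards [ae_restrict_mem measurableSet_Ioi] with y hy
          have hy : 0 < y := hy
          have e1 : g y ^ (p - 1) ≤ y ^ (-((finrank ℝ E : ℝ) - 1)) := by
            have := Real.rpow_le_rpow (hg0 y) (hgu y hy) hp1.le
            rwa [← Real.rpow_mul hy.le, show -α * (p - 1) = -((finrank ℝ E : ℝ) - 1) by
              rw [hα]; field_simp] at this
          have e2 : g y ^ p = g y * g y ^ (p - 1) := by
            rw [← Real.rpow_one_add' (hg0 y) (by linarith)]; congr 1; ring
          have e3 : y ^ (finrank ℝ E - 1) * y ^ (-((finrank ℝ E : ℝ) - 1)) = 1 := by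
            rw [← Real.rpow_natCast, ← Real.rpow_add hy, Nat.cast_sub hd]; simp
          have hmp : 0 ≤ m ^ (-p) := by positivity
          calc y ^ (finrank ℝ E - 1) * (g y / m) ^ p
              = m ^ (-p) * g y * (y ^ (finrank ℝ E - 1) * g y ^ (p - 1)) := by
                rw [Real.div_rpow (hg0 y) hm0.le, e2, Real.rpow_neg hm0.le]
                ring
            _ ≤ m ^ (-p) * g y * (y ^ (finrank ℝ E - 1) * y ^ (-((finrank ℝ E : ℝ) - 1))) := by
                have := hg0 y
                gcongr
            _ = m ^ (-p) * g y := by rw [e3, mul_one]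
    _ = (finrank ℝ E * μ.real (ball 0 1)) * m ^ (1 - p) := by
        rw [integral_const_mul, hgm, ← Real.rpow_add_one hm0.ne']
        congr 2; ring
    _ ≤ _ := by
        refine mul_le_mul_of_nonneg_left ?_ (by positivity)
        exact Real.rpow_le_rpow_of_nonpos hlow0 hmlow (by linarith)

theorem pCapacity_bddBelow {N : ℕ} (p : ℝ) (K E : Set (EuclideanSpace ℝ (Fin N))) :
    BddBelow {c : ℝ | ∃ φ : EuclideanSpace ℝ (Fin N) → ℝ, ContDiff ℝ (⊤ : ℕ∞) φ ∧
      HasCompactSupport φ ∧ tsupport φ ⊆ E ∧ (∀ x ∈ K, 1 ≤ φ x) ∧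
      c = ∫ x, ‖fderiv ℝ φ x‖ ^ p} := by
  refine ⟨0, ?_⟩
  rintro c ⟨φ, -, -, -, -, rfl⟩
  exact integral_nonneg fun x => by positivity

theorem pCapacity_nonneg {N : ℕ} (p : ℝ) (K E : Set (EuclideanSpace ℝ (Fin N))) :
    0 ≤ pCapacity p K E := by
  refine Real.sInf_nonneg ?_
  rintro c ⟨φ, -, -, -, -, rfl⟩
  exact integral_nonneg fun x => by positivity

theorem pCapacity_empty {N : ℕ} (p : ℝ) (hp : p ≠ 0) (E : Set (EuclideanSpace ℝ (Fin N))) :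
    pCapacity p ∅ E = 0 := by
  refine le_antisymm (csInf_le (pCapacity_bddBelow _ _ _) ?_) (pCapacity_nonneg _ _ _)
  refine ⟨fun _ => 0, contDiff_const, HasCompactSupport.zero, ?_, by simp, ?_⟩
  · have : tsupport (fun _ : EuclideanSpace ℝ (Fin N) => (0:ℝ)) = ∅ := by
      simp [tsupport_eq_empty_iff, funext_iff]
    simp [this]
  · simp [Real.zero_rpow hp]

open Metric Topology in
theorem cap_upper (N : ℕ) (p : ℝ) (hN : 2 ≤ N) (hp : (N:ℝ) < p)
    (x₀ : EuclideanSpace ℝ (Fin N)) (r : ℝ) (hr : 0 < r) :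
    pCapacity p (closedBall x₀ r) (ball x₀ (2 * r)) ≤
      (N * (volume : Measure (EuclideanSpace ℝ (Fin N))).real (ball 0 1)) *
      (((2 * r) ^ ((p - N) / (p - 1)) - r ^ ((p - N) / (p - 1))) /
        ((p - N) / (p - 1))) ^ (1 - p) := by
  haveI : Nonempty (Fin N) := ⟨⟨0, by omega⟩⟩
  have hN' : (2:ℝ) ≤ N := by exact_mod_cast hN
  have hκ0 : 0 < (p - N) / (p - 1) := div_pos (by linarith) (by linarith)
  set κ := (p - N) / (p - 1) with hκ
  have hlim : Tendsto (fun δ : ℝ =>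
      (N * (volume : Measure (EuclideanSpace ℝ (Fin N))).real (ball 0 1)) *
      (((2 * r - δ) ^ κ - (r + δ) ^ κ) / κ) ^ (1 - p)) (𝓝[>] 0)
      (𝓝 ((N * (volume : Measure (EuclideanSpace ℝ (Fin N))).real (ball 0 1)) *
      (((2 * r) ^ κ - r ^ κ) / κ) ^ (1 - p))) := by
    have hc : ContinuousAt (fun δ : ℝ =>
      (N * (volume : Measure (EuclideanSpace ℝ (Fin N))).real (ball 0 1)) *
      (((2 * r - δ) ^ κ - (r + δ) ^ κ) / κ) ^ (1 - p)) 0 := by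
      have h1 : ContinuousAt (fun δ : ℝ => ((2 * r - δ) ^ κ - (r + δ) ^ κ) / κ) 0 := by
        refine ContinuousAt.div_const (ContinuousAt.sub ?_ ?_) _
        · exact ContinuousAt.rpow_const (by fun_prop) (Or.inr hκ0.le)
        · exact ContinuousAt.rpow_const (by fun_prop) (Or.inr hκ0.le)
      refine continuousAt_const.mul (h1.rpow_const (Or.inl ?_))
      have : r ^ κ < (2 * r) ^ κ := Real.rpow_lt_rpow hr.le (by linarith) hκ0
      have h2 : 0 < ((2 * r) ^ κ - r ^ κ) / κ := div_pos (by linarith) hκ0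
      simpa using h2.ne'
    have := hc.tendsto.mono_left (nhdsWithin_le_nhds (s := Set.Ioi 0))
    simpa using this
  refine ge_of_tendsto hlim ?_
  filter_upwards [Ioo_mem_nhdsGT (show 0 < r / 2 by linarith)] with δ hδ
  obtain ⟨φ, h1, h2, h3, h4, h5⟩ := exists_test (volume : Measure (EuclideanSpace ℝ (Fin N))) p
    (by simp; omega) (by simpa using hp) x₀ r (r + δ) (2 * r - δ) (2 * r) hr
    (by linarith [hδ.1]) (by linarith [hδ.2]) (by linarith [hδ.1])
  rw [finrank_euclideanSpace_fin] at h5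
  exact (csInf_le (pCapacity_bddBelow _ _ _) ⟨φ, h1, h2, h3, h4, rfl⟩).trans h5

open Metric in
theorem cap_lower (N : ℕ) (p : ℝ) (hN : 2 ≤ N) (hp : (N:ℝ) < p)
    (x₀ x : EuclideanSpace ℝ (Fin N)) (r : ℝ) (hr : 0 < r)
    (K : Set (EuclideanSpace ℝ (Fin N))) (hK : K ⊆ closedBall x₀ r) (hx : x ∈ K) :
      (N * (volume : Measure (EuclideanSpace ℝ (Fin N))).real (ball 0 1)) *
      ((2 * r) ^ ((p - N) / (p - 1)) / ((p - N) / (p - 1))) ^ (1 - p) ≤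
    pCapacity p K (ball x₀ (2 * r)) := by
  haveI : Nonempty (Fin N) := ⟨⟨0, by omega⟩⟩
  refine le_csInf ?_ ?_
  · obtain ⟨φ, h1, h2, h3, h4, h5⟩ := exists_test (volume : Measure (EuclideanSpace ℝ (Fin N))) p
      (by simp; omega) (by simpa using hp) x₀ r (r + r / 4) (2 * r - r / 4) (2 * r) hr
      (by linarith) (by linarith) (by linarith)
    exact ⟨_, φ, h1, h2, h3, fun y hy => h4 y (hK hy), rfl⟩
  · rintro c ⟨φ, h1, h2, h3, h4, rfl⟩
    have := energy_lower (volume : Measure (EuclideanSpace ℝ (Fin N))) p (by simp; omega)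
      (by simpa using hp) φ h1 h2 x x₀ (2 * r) (by linarith) h3 (h4 x hx)
    rwa [finrank_euclideanSpace_fin] at this

open Metric in
theorem ball_of_negligible (N : ℕ) (p γ : ℝ)
    (hN : 2 ≤ N) (hp : (N:ℝ) < p) (hγ0 : 0 ≤ γ)
    (hγ : γ < 2 ^ ((N:ℝ) - p) * (2 ^ ((p - (N:ℝ)) / (p - 1)) - 1) ^ (p - 1))
    (Ω : Set (EuclideanSpace ℝ (Fin N))) (x₀ : EuclideanSpace ℝ (Fin N)) (r : ℝ) (hr : 0 < r)
    (h : IsNegligible p γ Ω x₀ r) : closedBall x₀ r ⊆ Ω := by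
  haveI : Nonempty (Fin N) := ⟨⟨0, by omega⟩⟩
  intro x hx
  by_contra hxΩ
  have hl := cap_lower N p hN hp x₀ x r hr (closedBall x₀ r \ Ω) Set.sdiff_subset ⟨hx, hxΩ⟩
  have hu := cap_upper N p hN hp x₀ r hr
  have hu' := (hl.trans h).trans (mul_le_mul_of_nonneg_left hu hγ0)
  have hN' : (2:ℝ) ≤ N := by exact_mod_cast hN
  have hp1 : 0 < p - 1 := by linarith
  have hκ0 : 0 < (p - N) / (p - 1) := div_pos (by linarith) hp1
  have hκp : (p - N) / (p - 1) * (1 - p) = N - p := by field_simp; ring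
  set κ := (p - N) / (p - 1) with hκ
  have h2 : (0:ℝ) < 2 ^ κ - 1 := by
    have := Real.one_lt_rpow (show (1:ℝ) < 2 by norm_num) hκ0
    linarith
  have hω : 0 < (volume : Measure (EuclideanSpace ℝ (Fin N))).real (ball 0 1) :=
    ENNReal.toReal_pos (measure_ball_pos _ _ one_pos).ne' measure_ball_lt_top.ne
  set ω := (volume : Measure (EuclideanSpace ℝ (Fin N))).real (ball 0 1)
  have hA : 0 < r ^ κ / κ := by positivity
  have e1 : ((2 * r) ^ κ / κ) ^ (1 - p) = 2 ^ ((N:ℝ) - p) * (r ^ κ / κ) ^ (1 - p) := by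
    rw [Real.mul_rpow (by norm_num) hr.le, mul_div_assoc, Real.mul_rpow (by positivity) hA.le,
      ← Real.rpow_mul (by norm_num), hκp]
  have e2 : (((2 * r) ^ κ - r ^ κ) / κ) ^ (1 - p) =
      ((2 ^ κ - 1) ^ (p - 1))⁻¹ * (r ^ κ / κ) ^ (1 - p) := by
    rw [Real.mul_rpow (by norm_num) hr.le,
      show ((2:ℝ) ^ κ * r ^ κ - r ^ κ) / κ = (2 ^ κ - 1) * (r ^ κ / κ) by ring,
      Real.mul_rpow h2.le hA.le, ← Real.rpow_neg h2.le, neg_sub]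
  rw [e1, e2] at hu'
  have hB : 0 < (r ^ κ / κ) ^ (1 - p) := Real.rpow_pos_of_pos hA _
  have hC : 0 < (2 ^ κ - 1 : ℝ) ^ (p - 1) := Real.rpow_pos_of_pos h2 _
  set B := (r ^ κ / κ) ^ (1 - p)
  set C := (2 ^ κ - 1 : ℝ) ^ (p - 1)
  have hNω : 0 < (N:ℝ) * ω * B := by positivity
  have h3 : 2 ^ ((N:ℝ) - p) ≤ γ * C⁻¹ := by
    refine le_of_mul_le_mul_left ?_ hNω
    calc _ = N * ω * (2 ^ ((N:ℝ) - p) * B) := by ring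
      _ ≤ _ := hu'
      _ = _ := by ring
  rw [← div_eq_mul_inv, le_div_iff₀ hC] at h3
  linarith

/-- In the superconformal range `p > N`, for every `0 ≤ γ` below the threshold
`γ₀ = 2^{N-p} (2^{(p-N)/(p-1)} - 1)^{p-1}`, the `(p,γ)`-capacitary inradius coincides
with the classical inradius. -/
theorem capInradius_eq_inradius_superconformal (N : ℕ) (p γ : ℝ)
    (hN : 2 ≤ N) (hp : (N:ℝ) < p) (hγ0 : 0 ≤ γ)
    (hγ : γ < 2 ^ ((N:ℝ) - p) * (2 ^ ((p - (N:ℝ)) / (p - 1)) - 1) ^ (p - 1))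
    (Ω : Set (EuclideanSpace ℝ (Fin N))) (hΩ : IsOpen Ω) :
    capInradius p γ Ω = eInradius Ω := by
  have hN' : (2:ℝ) ≤ N := by exact_mod_cast hN
  apply le_antisymm
  · refine sSup_le ?_
    rintro ρ ⟨r, hr, rfl, x₀, h⟩
    exact le_sSup ⟨r, hr, rfl, x₀, Metric.ball_subset_closedBall.trans
      (ball_of_negligible N p γ hN hp hγ0 hγ Ω x₀ r hr h)⟩
  · refine sSup_le ?_
    rintro ρ ⟨r, hr, rfl, x₀, h⟩
    refine le_of_forall_lt fun c hc => ?_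
    obtain ⟨c', hc1, hc2⟩ := exists_between hc
    have hct : c' ≠ ⊤ := hc2.ne_top
    have hc0 : 0 < c'.toReal := ENNReal.toReal_pos (zero_le.trans_lt hc1).ne' hct
    refine hc1.trans_le (le_sSup ⟨c'.toReal, hc0, (ENNReal.ofReal_toReal hct).symm, x₀, ?_⟩)
    have hlt : c'.toReal < r := (ENNReal.lt_ofReal_iff_toReal_lt hct).1 hc2
    unfold IsNegligible
    rw [Set.sdiff_eq_empty.2 ((Metric.closedBall_subset_ball hlt).trans h),
      pCapacity_empty p (by linarith)]
    exact mul_nonneg hγ0 (pCapacity_nonneg _ _ _)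
end
end
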